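/- Every planar graph is 5-choosable; that is, for every planar graph G and every list assignment L for G with |L(v)| ≥ 5 for every vertex v of G, G has an L-coloring. -/

import Mathlib

/-!
Common definitions: plane graphs (given by a concrete embedding in the plane),
outer face, canvases, list colorings, governments, harmonicas and coloring
harmonicas, following Postle–Thomas,
"Five-list-coloring graphs on surfaces III".
-/

open Set

universe u

/-- A finite simple graph together with an embedding in the plane:
each vertex gets a point, each edge a simple arc joining its endpoints;
arcs avoid other vertices, and two distinct edges meet only in common
endpoints. -/
structure PlaneGraph (V : Type u) where
  verts : Set V
  Adj : V → V → Prop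
  finite_verts : verts.Finite
  adj_symm : ∀ u v, Adj u v → Adj v u
  adj_irrefl : ∀ v, ¬Adj v v
  adj_mem : ∀ u v, Adj u v → u ∈ verts
  pos : V → ℝ × ℝ
  arc : Sym2 V → Set (ℝ × ℝ)
  pos_injOn : Set.InjOn pos verts
  arc_arc : ∀ u v, Adj u v → ∃ f : ℝ → ℝ × ℝ,
    ContinuousOn f (Set.Icc 0 1) ∧ Set.InjOn f (Set.Icc 0 1) ∧
    f '' Set.Icc 0 1 = arc s(u, v) ∧ f 0 = pos u ∧ f 1 = pos v
  arc_avoid : ∀ u v, Adj u v → ∀ w ∈ verts, pos w ∈ arc s(u, v) → w = u ∨ w = v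
  arc_meet : ∀ u v x y, Adj u v → Adj x y → s(u, v) ≠ s(x, y) →
    arc s(u, v) ∩ arc s(x, y) ⊆ pos '' (({u, v} : Set V) ∩ ({x, y} : Set V))

namespace PlaneGraph

variable {V : Type u}

/-- The point set of the drawing of the plane graph. -/
def image (G : PlaneGraph V) : Set (ℝ × ℝ) :=
  G.pos '' G.verts ∪ ⋃ (u : V) (v : V) (_ : G.Adj u v), G.arc s(u, v)

/-- The outer (unbounded) face of the drawing. -/
def outerFace (G : PlaneGraph V) : Set (ℝ × ℝ) :=
  {p | p ∉ G.image ∧ ¬Bornology.IsBounded (connectedComponentIn G.imageᶜ p)}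

/-- A vertex incident with (i.e. on the boundary of) the outer face. -/
def OnOuter (G : PlaneGraph V) (v : V) : Prop := G.pos v ∈ frontier G.outerFace

/-- An edge incident with (i.e. on the boundary of) the outer face. -/
def EdgeOnOuter (G : PlaneGraph V) (u v : V) : Prop :=
  G.arc s(u, v) ⊆ frontier G.outerFace

/-- The vertices of the boundary of the outer face. -/
def boundaryVerts (G : PlaneGraph V) : Set V := {v | v ∈ G.verts ∧ G.OnOuter v}

/-- Connectivity of a plane graph. -/
def Connected (G : PlaneGraph V) : Prop :=
  G.verts.Nonempty ∧ ∀ u ∈ G.verts, ∀ v ∈ G.verts, Relation.ReflTransGen G.Adj u v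

/-- `H` is a (plane) subgraph of `G`, drawn the same way. -/
def IsSubgraph (H G : PlaneGraph V) : Prop :=
  H.verts ⊆ G.verts ∧ (∀ u v, H.Adj u v → G.Adj u v) ∧
  (∀ v ∈ H.verts, H.pos v = G.pos v) ∧
  (∀ u v, H.Adj u v → H.arc s(u, v) = G.arc s(u, v))

/-- Delete a set of vertices (and all incident edges) from a plane graph. -/
def deleteVerts (G : PlaneGraph V) (s : Set V) : PlaneGraph V where
  verts := G.verts \ s
  Adj u v := G.Adj u v ∧ u ∉ s ∧ v ∉ s
  finite_verts := G.finite_verts.subset Set.diff_subset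
  adj_symm := fun u v h => ⟨G.adj_symm u v h.1, h.2.2, h.2.1⟩
  adj_irrefl := fun v h => G.adj_irrefl v h.1
  adj_mem := fun u v h => ⟨G.adj_mem u v h.1, h.2.1⟩
  pos := G.pos
  arc := G.arc
  pos_injOn := G.pos_injOn.mono Set.diff_subset
  arc_arc := fun u v h => G.arc_arc u v h.1
  arc_avoid := fun u v h w hw hm => G.arc_avoid u v h.1 w hw.1 hm
  arc_meet := fun u v x y h h' hne => G.arc_meet u v x y h.1 h'.1 hne

/-- `G` has a proper coloring from the lists `L`. -/
def HasLColoring (G : PlaneGraph V) (L : V → Finset ℕ) : Prop :=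
  ∃ φ : V → ℕ, (∀ v ∈ G.verts, φ v ∈ L v) ∧ ∀ u v, G.Adj u v → φ u ≠ φ v

/-- A vertex of degree exactly one. -/
def DegreeOne (G : PlaneGraph V) (x : V) : Prop :=
  (∃ a, G.Adj x a) ∧ ∀ a b, G.Adj x a → G.Adj x b → a = b

end PlaneGraph

/-- The cyclic successor of an index in a list. -/
def cycNext {V : Type u} (C : List V) (i : Fin C.length) : Fin C.length :=
  ⟨((i : ℕ) + 1) % C.length, Nat.mod_lt _ (lt_of_le_of_lt (Nat.zero_le _) i.isLt)⟩

/-- The list `C` is a cycle of `G` whose image is exactly the boundary of the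
outer face of `G`; i.e. `G` is a plane graph with outer cycle `C`. -/
def PlaneGraph.IsOuterCycle {V : Type u} (G : PlaneGraph V) (C : List V) : Prop :=
  C.Nodup ∧ 3 ≤ C.length ∧ (∀ v ∈ C, v ∈ G.verts) ∧
  (∀ i : Fin C.length, G.Adj (C.get i) (C.get (cycNext C i))) ∧
  frontier G.outerFace =
    G.pos '' {v | v ∈ C} ∪ ⋃ i : Fin C.length, G.arc s(C.get i, C.get (cycNext C i))

/-- `pq` is an edge of the cycle (given as a list) `C`. -/
def IsCycleEdge {V : Type u} (C : List V) (p q : V) : Prop :=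
  ∃ i : Fin C.length, s(p, q) = s(C.get i, C.get (cycNext C i))

/-- `(G, S, L)` is a canvas, where the subgraph `S` of the boundary of the
outer face of `G` is given by its vertex set `Sverts` and adjacency `SAdj`. -/
structure IsCanvas {V : Type u} (G : PlaneGraph V) (Sverts : Set V) (SAdj : V → V → Prop)
    (L : V → Finset ℕ) : Prop where
  sadj_symm : ∀ u v, SAdj u v → SAdj v u
  sadj_sub : ∀ u v, SAdj u v → G.Adj u v
  sadj_mem : ∀ u v, SAdj u v → u ∈ Sverts
  sverts_sub : Sverts ⊆ G.verts
  sverts_outer : ∀ v ∈ Sverts, G.OnOuter v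
  sedges_outer : ∀ u v, SAdj u v → G.EdgeOnOuter u v
  lists_nonempty : ∀ v ∈ G.verts, (L v).Nonempty
  card_inner : ∀ v ∈ G.verts, ¬G.OnOuter v → 5 ≤ (L v).card
  card_outside_S : ∀ v ∈ G.verts, v ∉ Sverts → 3 ≤ (L v).card
  scolorable : ∃ φ : V → ℕ, (∀ v ∈ Sverts, φ v ∈ L v) ∧ ∀ u v, SAdj u v → φ u ≠ φ v

/-- The adjacency relation of the single-edge path `p₁p₂`. -/
def pathAdj {V : Type u} (p1 p2 : V) : V → V → Prop :=
  fun u v => (u = p1 ∧ v = p2) ∨ (u = p2 ∧ v = p1)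

/-- `(G, P, L)` is a canvas whose precolored subgraph is a path `P = p₁p₂` of
length one (in the boundary of the outer face of `G`). -/
def IsPathCanvas {V : Type u} (G : PlaneGraph V) (p1 p2 : V) (L : V → Finset ℕ) : Prop :=
  p1 ≠ p2 ∧ IsCanvas G {p1, p2} (pathAdj p1 p2) L

/-- `c = (c₁, c₂)` is a proper `L`-coloring of the edge `p₁p₂`. -/
def ProperEdgeColoring {V : Type u} (L : V → Finset ℕ) (p1 p2 : V) (c : ℕ × ℕ) : Prop :=
  c.1 ∈ L p1 ∧ c.2 ∈ L p2 ∧ c.1 ≠ c.2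

/-- `Φ_T(P', 𝒞)`: the colorings of the edge `q₁q₂` extendable to an `L`-coloring
of `G` whose restriction to `p₁p₂` lies in `C`. -/
def Phi {V : Type u} (G : PlaneGraph V) (L : V → Finset ℕ) (p1 p2 q1 q2 : V)
    (C : Set (ℕ × ℕ)) : Set (ℕ × ℕ) :=
  {c | ∃ φ : V → ℕ, (∀ v ∈ G.verts, φ v ∈ L v) ∧ (∀ u v, G.Adj u v → φ u ≠ φ v) ∧
    (φ p1, φ p2) ∈ C ∧ φ q1 = c.1 ∧ φ q2 = c.2}

/-- The set of colors used on the first vertex of the path. -/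
def fstColors (C : Set (ℕ × ℕ)) : Set ℕ := Prod.fst '' C

/-- The set of colors used on the second vertex of the path. -/
def sndColors (C : Set (ℕ × ℕ)) : Set ℕ := Prod.snd '' C

/-- A dictatorship: at least two (distinct) colorings, all agreeing on one of
the two vertices (the dictator). -/
def IsDictatorship (C : Set (ℕ × ℕ)) : Prop :=
  (∃ c ∈ C, ∃ d ∈ C, c ≠ d) ∧
  ((∃ a, ∀ c ∈ C, c.1 = a) ∨ (∃ a, ∀ c ∈ C, c.2 = a))

/-- A democracy: exactly the two colorings `(x, y)` and `(y, x)`. -/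
def IsDemocracy (C : Set (ℕ × ℕ)) : Prop :=
  ∃ x y : ℕ, x ≠ y ∧ C = {(x, y), (y, x)}

/-- A government is a dictatorship or a democracy. -/
def IsGovernment (C : Set (ℕ × ℕ)) : Prop := IsDictatorship C ∨ IsDemocracy C

/-- A confederacy: not a government, but the union of two governments. -/
def IsConfederacy (C : Set (ℕ × ℕ)) : Prop :=
  ¬IsGovernment C ∧ ∃ C1 C2 : Set (ℕ × ℕ), IsGovernment C1 ∧ IsGovernment C2 ∧ C = C1 ∪ C2

/-- The canvas `(G, p₁p₂, L)` is a harmonica from the path `p₁p₂` to the path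
`q₁q₂` with government `C`. -/
inductive IsHarmonica {V : Type u} (L : V → Finset ℕ) :
    PlaneGraph V → V → V → V → V → Set (ℕ × ℕ) → Prop where
  /-- Rule (i): `G = P = P'`. -/
  | same (G : PlaneGraph V) (p1 p2 q1 q2 : V) (C : Set (ℕ × ℕ))
      (hcanvas : IsPathCanvas G p1 p2 L)
      (hproper : ∀ c ∈ C, ProperEdgeColoring L p1 p2 c)
      (hgov : IsGovernment C)
      (hq : (q1 = p1 ∧ q2 = p2) ∨ (q1 = p2 ∧ q2 = p1))
      (hverts : G.verts = {p1, p2})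
      (hedges : ∀ u v, G.Adj u v → pathAdj p1 p2 u v) :
      IsHarmonica L G p1 p2 q1 q2 C
  /-- Rule (ii): `C` is a dictatorship, `G = P ∪ P'`, `V(P) ∩ V(P') = {z}`
  where `z` is the dictator. -/
  | cherry (G : PlaneGraph V) (p1 p2 q1 q2 z : V) (C : Set (ℕ × ℕ))
      (hcanvas : IsPathCanvas G p1 p2 L)
      (hproper : ∀ c ∈ C, ProperEdgeColoring L p1 p2 c)
      (hdict : IsDictatorship C)
      (hq : q1 ≠ q2) (hqadj : G.Adj q1 q2) (hqout : G.EdgeOnOuter q1 q2)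
      (hverts : G.verts = {p1, p2, q1, q2})
      (hedges : ∀ u v, G.Adj u v → pathAdj p1 p2 u v ∨ pathAdj q1 q2 u v)
      (hz : (({p1, p2} : Set V) ∩ ({q1, q2} : Set V)) = {z})
      (hzdict : (z = p1 ∧ ∃ a, ∀ c ∈ C, c.1 = a) ∨ (z = p2 ∧ ∃ a, ∀ c ∈ C, c.2 = a)) :
      IsHarmonica L G p1 p2 q1 q2 C
  /-- Rule (iii): `C` is a dictatorship with dictator `z ∈ V(P)` in color `c`,
  sitting on a triangle `z u₁ u₂`. -/
  | dict (G : PlaneGraph V) (p1 p2 q1 q2 z w u1 u2 : V) (c : ℕ) (L0 : Finset ℕ)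
      (C C' : Set (ℕ × ℕ))
      (hcanvas : IsPathCanvas G p1 p2 L)
      (hproper : ∀ d ∈ C, ProperEdgeColoring L p1 p2 d)
      (hdict : IsDictatorship C)
      (hq : q1 ≠ q2) (hqadj : G.Adj q1 q2) (hqout : G.EdgeOnOuter q1 q2)
      (hz : (z = p1 ∧ w = p2 ∧ (∀ d ∈ C, d.1 = c) ∧
              (u1 = w → sndColors C = (L0 : Set ℕ)) ∧
              (u2 = w → sndColors C = (L0 : Set ℕ))) ∨
            (z = p2 ∧ w = p1 ∧ (∀ d ∈ C, d.2 = c) ∧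
              (u1 = w → fstColors C = (L0 : Set ℕ)) ∧
              (u2 = w → fstColors C = (L0 : Set ℕ))))
      (hzu1 : G.Adj z u1) (hzu2 : G.Adj z u2) (hu12 : G.Adj u1 u2)
      (hL0 : L0.card = 2)
      (hLu1 : u1 ∉ ({p1, p2} : Set V) → L u1 = L0 ∪ {c})
      (hLu2 : u2 ∉ ({p1, p2} : Set V) → L u2 = L0 ∪ {c})
      (hu1P : u1 ∈ ({p1, p2} : Set V) → u1 = w)
      (hu2P : u2 ∈ ({p1, p2} : Set V) → u2 = w)
      (hdem : IsDemocracy C')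
      (hC'1 : fstColors C' = (L0 : Set ℕ)) (hC'2 : sndColors C' = (L0 : Set ℕ))
      (hrec : IsHarmonica L (G.deleteVerts (({p1, p2} : Set V) \ {u1, u2})) u1 u2 q1 q2 C') :
      IsHarmonica L G p1 p2 q1 q2 C
  /-- Rule (iv), with `i = 1`: `C` is a democracy, `z` is a common neighbor of
  `p₁, p₂`, and `p₁` is deleted. -/
  | demo1 (G : PlaneGraph V) (p1 p2 q1 q2 z : V) (a b c : ℕ) (L0 : Finset ℕ)
      (C C' : Set (ℕ × ℕ))
      (hcanvas : IsPathCanvas G p1 p2 L)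
      (hproper : ∀ d ∈ C, ProperEdgeColoring L p1 p2 d)
      (hdemC : IsDemocracy C)
      (hq : q1 ≠ q2) (hqadj : G.Adj q1 q2) (hqout : G.EdgeOnOuter q1 q2)
      (hz1 : G.Adj z p1) (hz2 : G.Adj z p2)
      (hLz : L z = L0 ∪ {c})
      (hC1 : fstColors C = (L0 : Set ℕ)) (hC2 : sndColors C = (L0 : Set ℕ))
      (hab : a ≠ b) (hL0ab : (L0 : Set ℕ) = {a, b})
      (hC' : C' = {(c, a), (c, b)})
      (hrec : IsHarmonica L (G.deleteVerts {p1}) z p2 q1 q2 C') :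
      IsHarmonica L G p1 p2 q1 q2 C
  /-- Rule (iv), with `i = 2`: `C` is a democracy, `z` is a common neighbor of
  `p₁, p₂`, and `p₂` is deleted. -/
  | demo2 (G : PlaneGraph V) (p1 p2 q1 q2 z : V) (a b c : ℕ) (L0 : Finset ℕ)
      (C C' : Set (ℕ × ℕ))
      (hcanvas : IsPathCanvas G p1 p2 L)
      (hproper : ∀ d ∈ C, ProperEdgeColoring L p1 p2 d)
      (hdemC : IsDemocracy C)
      (hq : q1 ≠ q2) (hqadj : G.Adj q1 q2) (hqout : G.EdgeOnOuter q1 q2)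
      (hz1 : G.Adj z p1) (hz2 : G.Adj z p2)
      (hLz : L z = L0 ∪ {c})
      (hC1 : fstColors C = (L0 : Set ℕ)) (hC2 : sndColors C = (L0 : Set ℕ))
      (hab : a ≠ b) (hL0ab : (L0 : Set ℕ) = {a, b})
      (hC' : C' = {(c, a), (c, b)})
      (hrec : IsHarmonica L (G.deleteVerts {p2}) z p1 q1 q2 C') :
      IsHarmonica L G p1 p2 q1 q2 C

/-- `(G, L)` is a coloring harmonica from `uv` to `w` (source `Sum.inr (u, v)`)
or from `u` to `w` (source `Sum.inl u`). -/
inductive IsColoringHarmonica {V : Type u} [DecidableEq V] :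
    PlaneGraph V → (V → Finset ℕ) → V ⊕ V × V → V → Prop where
  /-- `G` is a triangle with vertex set `{u, v, w}`, `L(u) = L(v) = L(w)` and
  `|L(u)| = 2`. -/
  | tri (G : PlaneGraph V) (L : V → Finset ℕ) (u v w : V)
      (hconn : G.Connected) (huv : u ≠ v) (huw : u ≠ w) (hvw : v ≠ w)
      (hu : G.OnOuter u) (hv : G.OnOuter v) (hw : G.OnOuter w)
      (huvout : G.EdgeOnOuter u v)
      (hverts : G.verts = {u, v, w})
      (hadjuv : G.Adj u v) (hadjvw : G.Adj v w) (hadjuw : G.Adj u w)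
      (hLuv : L u = L v) (hLvw : L v = L w) (hcard : (L u).card = 2) :
      IsColoringHarmonica G L (Sum.inr (u, v)) w
  /-- There is a triangle `uvz` on the outer face; delete one or both of
  `u, v` and recurse from `z`. -/
  | step (G : PlaneGraph V) (L : V → Finset ℕ) (u v w z : V) (s : Set V)
      (hconn : G.Connected) (huv : u ≠ v) (huw : u ≠ w) (hvw : v ≠ w)
      (hu : G.OnOuter u) (hv : G.OnOuter v) (hw : G.OnOuter w)
      (huvout : G.EdgeOnOuter u v)
      (hadjuv : G.Adj u v) (hadjuz : G.Adj u z) (hadjvz : G.Adj v z)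
      (hz : G.OnOuter z)
      (hLuv : L u = L v) (hsub : L u ⊆ L z)
      (hcardu : (L u).card = 2) (hcardz : (L z).card = 3)
      (hs : s = {u} ∨ s = {v} ∨ s = ({u, v} : Set V))
      (hrec : IsColoringHarmonica (G.deleteVerts s)
        (Function.update L z (L z \ L u)) (Sum.inl z) w) :
      IsColoringHarmonica G L (Sum.inr (u, v)) w
  /-- `|L(u)| = 1`, `u` sits on a triangle `uxy`; delete `u` and recurse
  from `xy`. -/
  | vert (G : PlaneGraph V) (L : V → Finset ℕ) (u w x y : V)
      (hconn : G.Connected) (huw : u ≠ w)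
      (hu : G.OnOuter u) (hw : G.OnOuter w)
      (hx : G.OnOuter x) (hy : G.OnOuter y)
      (hadjux : G.Adj u x) (hadjuy : G.Adj u y) (hadjxy : G.Adj x y)
      (hcardu : (L u).card = 1)
      (hLxy : L x \ L u = L y \ L u) (hcardx : (L x \ L u).card = 2)
      (hrec : IsColoringHarmonica (G.deleteVerts {u})
        (Function.update (Function.update L x (L x \ L u)) y (L y \ L u))
        (Sum.inr (x, y)) w) :
      IsColoringHarmonica G L (Sum.inl u) w

/-- `(G, L)` contains a coloring harmonica `(H, L')` with the given source and
target: `H` is a subgraph of `G` and `L'` agrees with `L` on `V(H)`. -/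
def ContainsColoringHarmonica {V : Type u} [DecidableEq V] (G : PlaneGraph V)
    (L : V → Finset ℕ) (st : V ⊕ V × V) (w : V) : Prop :=
  ∃ (H : PlaneGraph V) (L' : V → Finset ℕ), H.IsSubgraph G ∧
    (∀ x ∈ H.verts, L' x = L x) ∧ IsColoringHarmonica H L' st w

/-- `v` is a cutvertex of the boundary of the outer face of `G`. -/
def BoundaryCutvertex {V : Type u} (G : PlaneGraph V) (v : V) : Prop :=
  ∃ a b : V, a ∈ G.boundaryVerts ∧ b ∈ G.boundaryVerts ∧ a ≠ v ∧ b ≠ v ∧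
    Relation.ReflTransGen (fun x y => G.Adj x y ∧ G.EdgeOnOuter x y) a b ∧
    ¬Relation.ReflTransGen
      (fun x y => G.Adj x y ∧ G.EdgeOnOuter x y ∧ x ≠ v ∧ y ≠ v) a b

open Classical in
/-- The list assignment of the democratic reduction `T(P, L0, x)`:
remove the colors of `L0` from the list of `x` and from the lists of all
neighbors of `P` other than `y`. -/
noncomputable def reducedL {V : Type u} (G : PlaneGraph V) (L : V → Finset ℕ)
    (L0 : Finset ℕ) (Q : List V) (x y : V) : V → Finset ℕ := fun w =>
  if w = x ∨ (w ≠ y ∧ ∃ p ∈ Q, G.Adj w p) then L w \ L0 else L w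

/-- The vertex set of the precolored subgraph of the democratic reduction:
`S ∖ V(P)`, together with `x` as an isolated vertex if its new list is
smaller than 3. -/
def reducedSverts {V : Type u} (Sverts : Set V) (Q : List V) (x : V)
    (L' : V → Finset ℕ) : Set V :=
  {v | (v ∈ Sverts ∧ v ∉ Q) ∨ (v = x ∧ (L' x).card < 3)}

/-- The adjacency of the precolored subgraph of the democratic reduction:
`S ∖ V(P)`. -/
def reducedSAdj {V : Type u} (SAdj : V → V → Prop) (Q : List V) : V → V → Prop :=
  fun u v => SAdj u v ∧ u ∉ Q ∧ v ∉ Q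

/-!
Planarity is used only through the absence of a `K₅` minor. A plane graph has none because five
points of the plane cannot be joined pairwise by curves such that curves without a common end are
disjoint: the angle that such a curve sweeps around a point cannot be assigned consistently.

The coloring is Thomassen's induction, with the outer face replaced by the neighborhood of an apex
`x`: at most two adjacent neighbors of `x` are precolored, the other neighbors have lists of size
three, and all remaining vertices have lists of size five. If every neighbor of `x` is precolored,
another vertex is colored and becomes the apex. If the neighbors of `x` induce a forest, or a cycle
through a precolored vertex, then some neighbor `v` that is not precolored sees, up to one exception
`y`, only such neighbors of `x` as are precolored with one common color. Reserve two further colors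
for `v`, delete them from the lists of the neighbors of `v` not adjacent to `x`, and contract the
edge `xv`; in the end `v` gets a reserved color not used on `y`. Otherwise a shortest cycle among
the neighbors of `x` misses a neighbor of `x`, whose component off the cycle is attached to at most
two vertices of the cycle, as a third one would create a `K₅` minor. The graph is then colored one
side of this separation after the other.
-/

/-! ### List colorings of vertex sets -/

section ListColoring

variable {V α : Type*} {G : SimpleGraph V} {S : Set V} {L L' : V → Finset α} {φ ψ : V → α}

/-- `φ` is a proper coloring from the lists `L` of the subgraph of `G` induced on `S`. Colors are
assigned to all vertices of the ambient type, but those outside `S` are unconstrained. -/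
def IsListColoringOn (G : SimpleGraph V) (S : Set V) (L : V → Finset α) (φ : V → α) : Prop :=
  (∀ v ∈ S, φ v ∈ L v) ∧ ∀ u ∈ S, ∀ v ∈ S, G.Adj u v → φ u ≠ φ v

/-- The subgraph of `G` induced on `S` has a proper coloring from the lists `L`. -/
def ListColorableOn (G : SimpleGraph V) (S : Set V) (L : V → Finset α) : Prop :=
  ∃ φ, IsListColoringOn G S L φ

open Classical in
/-- The list assignment obtained from `L` by deleting the colors in `K` at the vertices of `Q`. -/
noncomputable def removeColors (L : V → Finset α) (K : Finset α) (Q : Set V) (v : V) : Finset α :=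
  if v ∈ Q then L v \ K else L v

open Classical in
/-- The list assignment obtained from `L` by forcing the coloring `φ` on `Q`. -/
noncomputable def precolor (L : V → Finset α) (φ : V → α) (Q : Set V) (v : V) : Finset α :=
  if v ∈ Q then {φ v} else L v

lemma mem_removeColors {K : Finset α} {Q : Set V} {v : V} {a : α} :
    a ∈ removeColors L K Q v ↔ a ∈ L v ∧ (v ∈ Q → a ∉ K) := by
  by_cases hv : v ∈ Q <;> simp [removeColors, hv]

lemma removeColors_subset (L : V → Finset α) (K : Finset α) (Q : Set V) (v : V) :
    removeColors L K Q v ⊆ L v :=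
  fun _ ha ↦ (mem_removeColors.1 ha).1

lemma removeColors_eq_of_disjoint {K : Finset α} {Q : Set V} {v : V}
    (h : v ∈ Q → Disjoint (L v) K) : removeColors L K Q v = L v := by
  ext a
  rw [mem_removeColors, and_iff_left_iff_imp]
  exact fun ha hv haK ↦ Finset.disjoint_left.1 (h hv) ha haK

lemma removeColors_of_notMem (L : V → Finset α) (K : Finset α) {Q : Set V} {v : V} (hv : v ∉ Q) :
    removeColors L K Q v = L v :=
  if_neg hv

lemma card_le_card_removeColors_add (L : V → Finset α) (K : Finset α) (Q : Set V) (v : V) :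
    (L v).card ≤ (removeColors L K Q v).card + K.card := by
  classical
  refine (Finset.card_le_card fun a ha ↦ ?_).trans (Finset.card_union_le _ K)
  simp only [Finset.mem_union, mem_removeColors]
  tauto

lemma precolor_of_mem (L : V → Finset α) (φ : V → α) {Q : Set V} {v : V} (hv : v ∈ Q) :
    precolor L φ Q v = {φ v} :=
  if_pos hv

lemma precolor_of_notMem (L : V → Finset α) (φ : V → α) {Q : Set V} {v : V} (hv : v ∉ Q) :
    precolor L φ Q v = L v :=
  if_neg hv

namespace IsListColoringOn

lemma mono_list (h : IsListColoringOn G S L φ) (hL : ∀ v ∈ S, L v ⊆ L' v) :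
    IsListColoringOn G S L' φ :=
  ⟨fun v hv ↦ hL v hv (h.1 v hv), h.2⟩

lemma mono_graph {G' : SimpleGraph V} (h : IsListColoringOn G' S L φ) (hG : G ≤ G') :
    IsListColoringOn G S L φ :=
  ⟨h.1, fun u hu v hv huv ↦ h.2 u hu v hv (hG huv)⟩

open Classical in
lemma extend {v : V} {c : α} (h : IsListColoringOn G (S \ {v}) L φ) (hc : c ∈ L v)
    (hφ : ∀ u ∈ S, G.Adj v u → φ u ≠ c) : ListColorableOn G S L := by
  refine ⟨Function.update φ v c, fun u hu ↦ ?_, fun u hu w hw huw ↦ ?_⟩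
  · rcases eq_or_ne u v with rfl | huv
    · simpa using hc
    · simpa [huv] using h.1 u ⟨hu, huv⟩
  · rcases eq_or_ne u v with rfl | huv
    · simpa [huw.ne'] using (hφ w hw huw).symm
    rcases eq_or_ne w v with rfl | hwv
    · simpa [huv] using hφ u hu huw.symm
    · simpa [huv, hwv] using h.2 u ⟨hu, huv⟩ w ⟨hw, hwv⟩ huw

open Classical in
lemma glue {A B : Set V} (hφ : IsListColoringOn G A L φ) (hψ : IsListColoringOn G B L ψ)
    (hagree : ∀ v ∈ A ∩ B, φ v = ψ v) (hsep : ∀ a ∈ A \ B, ∀ b ∈ B \ A, ¬G.Adj a b) :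
    ListColorableOn G (A ∪ B) L := by
  have on_B : ∀ v ∈ B, A.piecewise φ ψ v = ψ v := fun v hv ↦ by
    by_cases hA : v ∈ A
    · rw [piecewise_eq_of_mem _ _ _ hA, hagree v ⟨hA, hv⟩]
    · exact piecewise_eq_of_notMem _ _ _ hA
  have on_A : ∀ v ∈ A, A.piecewise φ ψ v = φ v := fun v hv ↦ piecewise_eq_of_mem _ _ _ hv
  have cross : ∀ u ∈ A, ∀ v ∈ B, G.Adj u v → A.piecewise φ ψ u ≠ A.piecewise φ ψ v := by
    intro u hu v hv huv
    by_cases huB : u ∈ B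
    · simpa only [on_B u huB, on_B v hv] using hψ.2 u huB v hv huv
    by_cases hvA : v ∈ A
    · simpa only [on_A u hu, on_A v hvA] using hφ.2 u hu v hvA huv
    exact absurd huv (hsep u ⟨hu, huB⟩ v ⟨hv, hvA⟩)
  refine ⟨A.piecewise φ ψ, ?_, ?_⟩
  · rintro v (hv | hv)
    · exact on_A v hv ▸ hφ.1 v hv
    · exact on_B v hv ▸ hψ.1 v hv
  · rintro u (hu | hu) v (hv | hv) huv
    · simpa only [on_A u hu, on_A v hv] using hφ.2 u hu v hv huv
    · exact cross u hu v hv huv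
    · exact (cross v hv u hu huv.symm).symm
    · simpa only [on_B u hu, on_B v hv] using hψ.2 u hu v hv huv

end IsListColoringOn

end ListColoring

/-! ### Clique minors and contractions -/

section Minor

variable {V : Type*} {G H : SimpleGraph V} {n : ℕ}

/-- `B` is a model of the complete graph on `n` vertices in `G`: the branch sets `B i` are
connected, pairwise disjoint, and any two of them are joined by an edge. -/
structure IsCliqueModel (G : SimpleGraph V) (B : Fin n → Set V) : Prop where
  connected : ∀ i, (G.induce (B i)).Connected
  disjoint : ∀ i j, i ≠ j → Disjoint (B i) (B j)
  adj : ∀ i j, i ≠ j → ∃ a ∈ B i, ∃ b ∈ B j, G.Adj a b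

/-- The subgraph of `G` induced on `S` has the complete graph on `n` vertices as a minor. -/
def HasCliqueMinorOn (n : ℕ) (G : SimpleGraph V) (S : Set V) : Prop :=
  ∃ B : Fin n → Set V, IsCliqueModel G B ∧ ∀ i, B i ⊆ S

lemma isCliqueModel_elim0 (G : SimpleGraph V) : IsCliqueModel G (Fin.elim0 : Fin 0 → Set V) :=
  ⟨fun i ↦ i.elim0, fun i ↦ i.elim0, fun i ↦ i.elim0⟩

lemma IsCliqueModel.cons {B : Fin n → Set V} {Z : Set V} (hB : IsCliqueModel G B)
    (hZ : (G.induce Z).Connected) (hdisj : ∀ i, Disjoint Z (B i))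
    (hadj : ∀ i, ∃ a ∈ Z, ∃ b ∈ B i, G.Adj a b) :
    IsCliqueModel G (Fin.cons Z B : Fin (n + 1) → Set V) where
  connected := Fin.cases hZ hB.connected
  disjoint i j hij := by
    cases i using Fin.cases <;> cases j using Fin.cases
    · exact absurd rfl hij
    · exact hdisj _
    · exact (hdisj _).symm
    · exact hB.disjoint _ _ fun h ↦ hij (congrArg Fin.succ h)
  adj i j hij := by
    cases i using Fin.cases <;> cases j using Fin.cases
    · exact absurd rfl hij
    · exact hadj _
    · obtain ⟨a, ha, b, hb, hab⟩ := hadj _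
      exact ⟨b, hb, a, ha, hab.symm⟩
    · exact hB.adj _ _ fun h ↦ hij (congrArg Fin.succ h)

lemma HasCliqueMinorOn.mono {S T : Set V} (h : HasCliqueMinorOn n G S) (hST : S ⊆ T) :
    HasCliqueMinorOn n G T :=
  let ⟨B, hB, hBS⟩ := h
  ⟨B, hB, fun i ↦ (hBS i).trans hST⟩

lemma HasCliqueMinorOn.mono_graph {S : Set V} (h : HasCliqueMinorOn n G S) (hGH : G ≤ H) :
    HasCliqueMinorOn n H S := by
  obtain ⟨B, hB, hBS⟩ := h
  refine ⟨B, ⟨fun i ↦ (hB.connected i).mono fun _ _ hab ↦ hGH hab, hB.disjoint, ?_⟩, hBS⟩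
  intro i j hij
  obtain ⟨a, ha, b, hb, hab⟩ := hB.adj i j hij
  exact ⟨a, ha, b, hb, hGH hab⟩

lemma connected_induce_singleton (G : SimpleGraph V) (v : V) :
    (G.induce ({v} : Set V)).Connected := by
  rw [SimpleGraph.induce_singleton_eq_top]
  exact SimpleGraph.connected_top

lemma connected_induce_biUnion {A : Set V} {F : V → Set V} (hA : (H.induce A).Connected)
    (hF : ∀ a ∈ A, (G.induce (F a)).Connected)
    (hadj : ∀ a ∈ A, ∀ b ∈ A, H.Adj a b → ∃ x ∈ F a, ∃ y ∈ F b, G.Adj x y) :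
    (G.induce (⋃ a ∈ A, F a)).Connected := by
  obtain ⟨a₀⟩ := hA.nonempty
  have patch (b : A) (hb : Relation.ReflTransGen (H.induce A).Adj a₀ b) :
      ∃ s ⊆ ⋃ a ∈ A, F a, F a₀ ⊆ s ∧ F b ⊆ s ∧ (G.induce s).Connected := by
    induction hb with
    | refl => exact ⟨F a₀, subset_biUnion_of_mem a₀.2, subset_rfl, subset_rfl, hF _ a₀.2⟩
    | @tail b c _ hbc ih =>
      obtain ⟨s, hs, ha₀s, hbs, hconn⟩ := ih
      obtain ⟨x, hx, y, hy, hxy⟩ := hadj b b.2 c c.2 hbc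
      exact ⟨s ∪ F c, union_subset hs (subset_biUnion_of_mem c.2),
        ha₀s.trans subset_union_left, subset_union_right,
        SimpleGraph.connected_induce_union hconn.preconnected (hF c c.2).preconnected (hbs hx) hy
          hxy⟩
  obtain ⟨u, hu⟩ := (hF a₀ a₀.2).nonempty
  refine SimpleGraph.induce_connected_of_patches u (subset_biUnion_of_mem a₀.2 hu) fun {v} hv ↦ ?_
  obtain ⟨b, hb, hvb⟩ := mem_iUnion₂.1 hv
  obtain ⟨s, hs, ha₀s, hbs, hconn⟩ :=
    patch ⟨b, hb⟩ ((SimpleGraph.reachable_iff_reflTransGen _ _).1 (hA.preconnected _ _))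
  exact ⟨s, hs, ha₀s hu, hbs hvb, hconn.preconnected _ _⟩

lemma HasCliqueMinorOn.of_branchSets {A S : Set V} {F : V → Set V}
    (h : HasCliqueMinorOn n H A) (hF : ∀ a ∈ A, (G.induce (F a)).Connected)
    (hdisj : A.PairwiseDisjoint F) (hFS : ∀ a ∈ A, F a ⊆ S)
    (hadj : ∀ a ∈ A, ∀ b ∈ A, H.Adj a b → ∃ x ∈ F a, ∃ y ∈ F b, G.Adj x y) :
    HasCliqueMinorOn n G S := by
  obtain ⟨B, hB, hBA⟩ := h
  refine ⟨fun i ↦ ⋃ a ∈ B i, F a, ⟨fun i ↦ ?_, fun i j hij ↦ ?_, fun i j hij ↦ ?_⟩, fun i ↦ ?_⟩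
  · exact connected_induce_biUnion (hB.connected i) (fun a ha ↦ hF a (hBA i ha))
      fun a ha b hb ↦ hadj a (hBA i ha) b (hBA i hb)
  · simp only [disjoint_iUnion_left, disjoint_iUnion_right]
    exact fun b hb a ha ↦ hdisj (hBA i ha) (hBA j hb) ((hB.disjoint i j hij).ne_of_mem ha hb)
  · obtain ⟨a, ha, b, hb, hab⟩ := hB.adj i j hij
    obtain ⟨x, hx, y, hy, hxy⟩ := hadj a (hBA i ha) b (hBA j hb) hab
    exact ⟨x, mem_biUnion ha hx, y, mem_biUnion hb hy, hxy⟩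
  · exact iUnion₂_subset fun a ha ↦ hFS a (hBA i ha)

/-- The contraction of the vertex set `M` of `G` to the vertex `c`. The other vertices of `M` are
kept, so the contracted graph proper is the one induced on the complement of `M \ {c}`. -/
def contract (G : SimpleGraph V) (M : Set V) (c : V) : SimpleGraph V :=
  SimpleGraph.fromRel fun a b ↦ G.Adj a b ∨ a = c ∧ ∃ m ∈ M, G.Adj m b

lemma le_contract (G : SimpleGraph V) (M : Set V) (c : V) : G ≤ contract G M c :=
  fun _ _ hab ↦ (SimpleGraph.fromRel_adj ..).2 ⟨hab.ne, .inl (.inl hab)⟩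

lemma contract_adj_center {M : Set V} {b c m : V} (hm : m ∈ M) (hmb : G.Adj m b) (hbc : b ≠ c) :
    (contract G M c).Adj c b :=
  (SimpleGraph.fromRel_adj ..).2 ⟨hbc.symm, .inl (.inr ⟨rfl, m, hm, hmb⟩)⟩

lemma contract_adj_iff_of_ne {M : Set V} {a b c : V} (ha : a ≠ c) (hb : b ≠ c) :
    (contract G M c).Adj a b ↔ G.Adj a b := by
  simp only [contract, SimpleGraph.fromRel_adj, ha, hb, false_and, or_false, G.adj_comm b a,
    or_self, and_iff_right_iff_imp]
  exact SimpleGraph.Adj.ne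

lemma exists_adj_of_contract_adj_center {M : Set V} {b c : V} (hc : c ∈ M)
    (h : (contract G M c).Adj c b) : ∃ m ∈ M, G.Adj m b := by
  obtain ⟨hcb, (h | ⟨-, h⟩) | (h | ⟨h, -⟩)⟩ := (SimpleGraph.fromRel_adj ..).1 h
  exacts [⟨c, hc, h⟩, h, ⟨c, hc, h.symm⟩, absurd h.symm hcb]

open Classical in
lemma HasCliqueMinorOn.of_contract {A M S : Set V} {c : V}
    (h : HasCliqueMinorOn n (contract G M c) A) (hM : (G.induce M).Connected) (hc : c ∈ M)
    (hMS : M ⊆ S) (hAS : A ⊆ S) (hMA : ∀ a ∈ A, a ∈ M → a = c) : HasCliqueMinorOn n G S := by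
  refine h.of_branchSets (F := fun a ↦ if a = c then M else {a}) ?_ ?_ ?_ ?_
  · intro a _
    by_cases hac : a = c
    · rwa [if_pos hac]
    · rw [if_neg hac]
      exact connected_induce_singleton G a
  · intro a ha b hb hab
    simp only [Function.onFun]
    split_ifs with h₁ h₂ h₂
    · exact absurd (h₁.trans h₂.symm) hab
    · exact disjoint_singleton_right.2 fun hbM ↦ h₂ (hMA b hb hbM)
    · exact disjoint_singleton_left.2 fun haM ↦ h₁ (hMA a ha haM)
    · exact disjoint_singleton.2 hab
  · intro a ha
    split_ifs
    exacts [hMS, singleton_subset_iff.2 (hAS ha)]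
  · intro a _ b _ hab
    rcases eq_or_ne a c with rfl | hac
    · obtain ⟨m, hm, hmb⟩ := exists_adj_of_contract_adj_center hc hab
      exact ⟨m, by simpa using hm, b, by simp [hab.ne'], hmb⟩
    rcases eq_or_ne b c with rfl | hbc
    · obtain ⟨m, hm, hma⟩ := exists_adj_of_contract_adj_center hc hab.symm
      exact ⟨a, by simp [hac], m, by simpa using hm, hma.symm⟩
    · exact ⟨a, by simp [hac], b, by simp [hbc], (contract_adj_iff_of_ne hac hbc).1 hab⟩

lemma HasCliqueMinorOn.of_sup_edge {A M S : Set V} {c d m : V}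
    (h : HasCliqueMinorOn n (G ⊔ SimpleGraph.edge c d) A) (hM : (G.induce M).Connected)
    (hc : c ∈ M) (hm : m ∈ M) (hmd : G.Adj m d) (hMS : M ⊆ S) (hAS : A ⊆ S)
    (hMA : ∀ a ∈ A, a ∈ M → a = c) : HasCliqueMinorOn n G S := by
  refine (h.mono_graph (sup_le (le_contract G M c) ?_)).of_contract hM hc hMS hAS hMA
  rcases eq_or_ne c d with rfl | hcd
  · simp
  · exact (SimpleGraph.edge_le_iff _).2 (.inr (contract_adj_center hm hmd hcd.symm))

end Minor

/-! ### Apex canvases -/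

section Canvas

variable {V α : Type*} {G G' : SimpleGraph V} {S A B P Q : Set V} {x v w c d : V}
  {L : V → Finset α} {φ : V → α}

/-- The setting of the inductive proof. The graph induced on `insert x S` has no `K₅` minor, the
vertices of `S` are to be colored from the lists `L`, and the apex `x` is only there to mark the
vertices whose lists may be short: its neighbors take the role that the vertices on the outer face
have in Thomassen's proof. The set `P` consists of at most two adjacent neighbors of `x`, which are
precolored in the sense that their lists are disjoint singletons. -/
structure IsApexCanvas (G : SimpleGraph V) (S : Set V) (x : V) (P : Set V) (L : V → Finset α) :
    Prop where
  finite : S.Finite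
  apex_notMem : x ∉ S
  no_minor : ¬HasCliqueMinorOn 5 G (insert x S)
  precolored_subset : P ⊆ S ∩ G.neighborSet x
  isClique : G.IsClique P
  encard_le : P.encard ≤ 2
  card_precolored : ∀ p ∈ P, (L p).card = 1
  disjoint_precolored : P.PairwiseDisjoint L
  three_le_card : ∀ v ∈ S, v ∉ P → 3 ≤ (L v).card
  five_le_card : ∀ v ∈ S, ¬G.Adj x v → 5 ≤ (L v).card

/-- The induction hypothesis: canvases with fewer than `n` vertices to color are colorable. -/
def ColorableBelow (V α : Type*) (n : ℕ) : Prop :=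
  ∀ (G : SimpleGraph V) (S : Set V) (x : V) (P : Set V) (L : V → Finset α),
    IsApexCanvas G S x P L → S.ncard < n → ListColorableOn G S L

namespace IsApexCanvas

lemma precolored_finite (h : IsApexCanvas G S x P L) : P.Finite :=
  h.finite.subset (h.precolored_subset.trans inter_subset_left)

lemma ne_apex (h : IsApexCanvas G S x P L) (hv : v ∈ S) : v ≠ x :=
  fun hvx ↦ h.apex_notMem (hvx ▸ hv)

lemma list_nonempty (h : IsApexCanvas G S x P L) (hv : v ∈ S) : (L v).Nonempty := by
  rw [← Finset.card_pos]
  by_cases hvP : v ∈ P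
  · simp [h.card_precolored v hvP]
  · exact (Nat.succ_pos 2).trans_le (h.three_le_card v hv hvP)

lemma moveApex (h : IsApexCanvas G S x P L) (hxP : ∀ v ∈ S, G.Adj x v → v ∈ P) (hw : w ∈ S)
    (hwP : w ∈ P ∨ P = ∅) {a : α} (ha : a ∈ L w) :
    IsApexCanvas G (S \ {w}) w (P \ {w}) (removeColors L {a} (G.neighborSet w)) := by
  have five_le (v : V) (hv : v ∈ S) (hvP : v ∉ P) : 5 ≤ (L v).card :=
    h.five_le_card v hv fun hxv ↦ hvP (hxP v hv hxv)
  have list_eq (p : V) (hp : p ∈ P \ {w}) :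
      removeColors L {a} (G.neighborSet w) p = L p := by
    refine removeColors_eq_of_disjoint fun _ ↦ Finset.disjoint_singleton_right.2 fun hap ↦ ?_
    have hwP : w ∈ P := hwP.resolve_right (nonempty_of_mem hp.1).ne_empty
    exact Finset.disjoint_left.1 (h.disjoint_precolored hp.1 hwP hp.2) hap ha
  refine ⟨h.finite.sdiff, fun hw ↦ hw.2 rfl, ?_, ?_, h.isClique.subset sdiff_subset,
    (encard_le_encard sdiff_subset).trans h.encard_le, fun p hp ↦ ?_, ?_, fun v hv hvP ↦ ?_,
    fun v hv hwv ↦ ?_⟩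
  · rw [insert_sdiff_singleton, insert_eq_of_mem hw]
    exact fun hminor ↦ h.no_minor (hminor.mono (subset_insert _ _))
  · intro p hp
    have hwP : w ∈ P := hwP.resolve_right (nonempty_of_mem hp.1).ne_empty
    exact ⟨⟨(h.precolored_subset hp.1).1, hp.2⟩, h.isClique hwP hp.1 (Ne.symm hp.2)⟩
  · exact (list_eq p hp).symm ▸ h.card_precolored p hp.1
  · exact (h.disjoint_precolored.subset sdiff_subset).mono fun v ↦ removeColors_subset L _ _ v
  · have := five_le v hv.1 fun hvP' ↦ hvP ⟨hvP', hv.2⟩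
    have := card_le_card_removeColors_add L {a} (G.neighborSet w) v
    rw [Finset.card_singleton] at this
    lia
  · rw [removeColors_of_notMem L _ (show v ∉ G.neighborSet w from hwv)]
    refine five_le v hv.1 fun hvP ↦ hwv ?_
    have hwP : w ∈ P := hwP.resolve_right (nonempty_of_mem hvP).ne_empty
    exact h.isClique hwP hvP (Ne.symm hv.2)

lemma contract (h : IsApexCanvas G S x P L) (hv : v ∈ S) (hxv : G.Adj x v) (hvP : v ∉ P)
    {K : Finset α} (hK : K.card ≤ 2) :
    IsApexCanvas (contract G {x, v} x) (S \ {v}) x P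
      (removeColors L K {u | G.Adj v u ∧ ¬G.Adj x u}) := by
  have list_eq (u : V) (hxu : G.Adj x u) :
      removeColors L K {u | G.Adj v u ∧ ¬G.Adj x u} u = L u :=
    removeColors_of_notMem L K fun hu ↦ hu.2 hxu
  have hPx (p : V) (hp : p ∈ P) : G.Adj x p := (h.precolored_subset hp).2
  have hle := le_contract G {x, v} x
  refine ⟨h.finite.sdiff, fun hx ↦ h.apex_notMem hx.1, fun hminor ↦ h.no_minor ?_,
    fun p hp ↦ ⟨⟨(h.precolored_subset hp).1, fun hpv ↦ hvP (hpv ▸ hp)⟩, hle (hPx p hp)⟩,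
    h.isClique.mono hle, h.encard_le, fun p hp ↦ ?_,
    h.disjoint_precolored.mono fun u ↦ removeColors_subset L K _ u, fun u hu huP ↦ ?_,
    fun u hu hxu ↦ ?_⟩
  · refine hminor.of_contract (SimpleGraph.induce_pair_connected_of_adj hxv) (mem_insert _ _)
      (insert_subset_insert (singleton_subset_iff.2 hv)) (insert_subset_insert sdiff_subset) ?_
    rintro u (hux | hu) (hux' | huv)
    exacts [hux, hux, hux', absurd huv hu.2]
  · exact (list_eq p (hPx p hp)).symm ▸ h.card_precolored p hp
  · by_cases hxu : G.Adj x u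
    · exact (list_eq u hxu).symm ▸ h.three_le_card u hu.1 huP
    · have := h.five_le_card u hu.1 hxu
      have := card_le_card_removeColors_add L K {u | G.Adj v u ∧ ¬G.Adj x u} u
      lia
  · rw [removeColors_of_notMem L K fun hvu ↦
      hxu (contract_adj_center (mem_insert_of_mem x rfl) hvu.1 (h.ne_apex hu.1))]
    exact h.five_le_card u hu.1 fun hxu' ↦ hxu (hle hxu')

lemma restrict (h : IsApexCanvas G S x P L) (hA : A ⊆ S) (hG : G ≤ G')
    (hminor : ¬HasCliqueMinorOn 5 G' (insert x A)) : IsApexCanvas G' A x (P ∩ A) L where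
  finite := h.finite.subset hA
  apex_notMem hx := h.apex_notMem (hA hx)
  no_minor := hminor
  precolored_subset _ hp := ⟨hp.2, hG (h.precolored_subset hp.1).2⟩
  isClique := (h.isClique.subset inter_subset_left).mono hG
  encard_le := (encard_le_encard inter_subset_left).trans h.encard_le
  card_precolored p hp := h.card_precolored p hp.1
  disjoint_precolored := h.disjoint_precolored.subset inter_subset_left
  three_le_card v hv hvP := h.three_le_card v (hA hv) fun hvP' ↦ hvP ⟨hvP', hv⟩
  five_le_card v hv hxv := h.five_le_card v (hA hv) fun hxv' ↦ hxv (hG hxv')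

lemma precolor (h : IsApexCanvas G S x P L) (hPQ : P ⊆ Q) (hQ : Q ⊆ S ∩ G.neighborSet x)
    (hclique : G.IsClique Q) (hcard : Q.encard ≤ 2) (hφ : InjOn φ Q) :
    IsApexCanvas G S x Q (precolor L φ Q) where
  finite := h.finite
  apex_notMem := h.apex_notMem
  no_minor := h.no_minor
  precolored_subset := hQ
  isClique := hclique
  encard_le := hcard
  card_precolored p hp := by rw [precolor_of_mem L φ hp, Finset.card_singleton]
  disjoint_precolored p hp q hq hpq := by
    rw [Function.onFun, precolor_of_mem L φ hp, precolor_of_mem L φ hq,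
      Finset.disjoint_singleton]
    exact hφ.ne hp hq hpq
  three_le_card v hv hvQ := by
    rw [precolor_of_notMem L φ hvQ]
    exact h.three_le_card v hv fun hvP ↦ hvQ (hPQ hvP)
  five_le_card v hv hxv := by
    rw [precolor_of_notMem L φ fun hvQ ↦ hxv (hQ hvQ).2]
    exact h.five_le_card v hv hxv

lemma precolor_subset (hφ : ∀ v ∈ S ∩ Q, φ v ∈ L v) (v : V) (hv : v ∈ S) :
    _root_.precolor L φ Q v ⊆ L v := by
  by_cases hvQ : v ∈ Q
  · rw [precolor_of_mem L φ hvQ]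
    exact Finset.singleton_subset_iff.2 (hφ v ⟨hv, hvQ⟩)
  · rw [precolor_of_notMem L φ hvQ]

lemma listColorableOn_of_forall_adj_mem [Nonempty α] (h : IsApexCanvas G S x P L)
    (ih : ColorableBelow V α S.ncard) (hxP : ∀ v ∈ S, G.Adj x v → v ∈ P) :
    ListColorableOn G S L := by
  rcases S.eq_empty_or_nonempty with rfl | hS
  · exact ⟨fun _ ↦ Classical.arbitrary α, by simp, by simp⟩
  obtain ⟨w, hw, hwP⟩ : ∃ w ∈ S, w ∈ P ∨ P = ∅ := by
    rcases P.eq_empty_or_nonempty with hP | ⟨p, hp⟩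
    exacts [⟨hS.some, hS.some_mem, .inr hP⟩, ⟨p, (h.precolored_subset hp).1, .inl hp⟩]
  obtain ⟨a, ha⟩ := h.list_nonempty hw
  obtain ⟨φ, hφ⟩ :=
    ih _ _ _ _ _ (h.moveApex hxP hw hwP ha) (ncard_sdiff_singleton_lt_of_mem hw h.finite)
  refine (hφ.mono_list fun v _ ↦ removeColors_subset L _ _ v).extend ha fun u hu hwu hua ↦ ?_
  exact (mem_removeColors.1 (hφ.1 u ⟨hu, hwu.ne'⟩)).2 hwu (Finset.mem_singleton.2 hua)

lemma listColorableOn_of_contract (h : IsApexCanvas G S x P L)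
    (ih : ColorableBelow V α S.ncard) (hv : v ∈ S) (hxv : G.Adj x v) (hvP : v ∉ P)
    {T : Finset α} (hT : T.card ≤ 1) (y : V)
    (hTL : ∀ u ∈ S, G.Adj x u → G.Adj v u → u ≠ y → L u ⊆ T) : ListColorableOn G S L := by
  classical
  obtain ⟨K, hKL, hK⟩ : ∃ K ⊆ L v \ T, K.card = 2 := by
    refine Finset.exists_subset_card_eq ?_
    have := h.three_le_card v hv hvP
    have := Finset.le_card_sdiff T (L v)
    lia
  obtain ⟨φ, hφ⟩ :=
    ih _ _ _ _ _ (h.contract hv hxv hvP hK.le) (ncard_sdiff_singleton_lt_of_mem hv h.finite)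
  obtain ⟨a, haK, hay⟩ := Finset.exists_mem_ne (hK ▸ one_lt_two) (φ y)
  obtain ⟨haL, haT⟩ := Finset.mem_sdiff.1 (hKL haK)
  refine ((hφ.mono_graph (le_contract G _ x)).mono_list fun u _ ↦
    removeColors_subset L K _ u).extend haL fun u hu hvu hua ↦ ?_
  obtain ⟨huL, huK⟩ := mem_removeColors.1 (hφ.1 u ⟨hu, hvu.ne'⟩)
  rcases eq_or_ne u y with rfl | huy
  · exact hay hua.symm
  by_cases hxu : G.Adj x u
  · exact haT (hTL u hu hxu hvu huy (hua ▸ huL))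
  · exact huK ⟨hvu, hxu⟩ (hua ▸ haK)

lemma listColorableOn_of_separation (h : IsApexCanvas G S x P L)
    (ih : ColorableBelow V α S.ncard) (hAB : A ∪ B = S) (hcd : A ∩ B = {c, d}) (hne : c ≠ d)
    (hxc : G.Adj x c) (hxd : G.Adj x d) (hPA : P ⊆ A) (hA : A ≠ S) (hB : B ≠ S)
    (hsep : ∀ a ∈ A \ B, ∀ b ∈ B \ A, ¬G.Adj a b)
    (hAminor : ¬HasCliqueMinorOn 5 (G ⊔ SimpleGraph.edge c d) (insert x A))
    (hBminor : ¬HasCliqueMinorOn 5 (G ⊔ SimpleGraph.edge c d) (insert x B)) :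
    ListColorableOn G S L := by
  have hAS : A ⊆ S := hAB ▸ subset_union_left
  have hBS : B ⊆ S := hAB ▸ subset_union_right
  have hcdA : {c, d} ⊆ A := hcd ▸ inter_subset_left
  have hcdB : {c, d} ⊆ B := hcd ▸ inter_subset_right
  have hadj : (G ⊔ SimpleGraph.edge c d).Adj c d := .inr (by simp [SimpleGraph.edge_adj, hne])
  have hle : G ≤ G ⊔ SimpleGraph.edge c d := le_sup_left
  obtain ⟨φ, hφ⟩ := ih _ _ _ _ _ (h.restrict hAS hle hAminor)
    (ncard_lt_ncard (hAS.ssubset_of_ne hA) h.finite)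
  have hφcd : φ c ≠ φ d :=
    hφ.2 c (hcdA (mem_insert _ _)) d (hcdA (mem_insert_of_mem _ rfl)) hadj
  have hcanvas : IsApexCanvas (G ⊔ SimpleGraph.edge c d) B x {c, d}
      (_root_.precolor L φ {c, d}) := by
    refine (h.restrict hBS hle hBminor).precolor ?_ ?_ ?_ (encard_pair hne).le ?_
    · exact hcd ▸ inter_subset_inter_left B hPA
    · exact subset_inter hcdB (pair_subset (hle hxc) (hle hxd))
    · simpa [SimpleGraph.isClique_pair] using fun _ ↦ hadj
    · simpa [injOn_pair] using fun hφ' ↦ absurd hφ' hφcd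
  obtain ⟨ψ, hψ⟩ := ih _ _ _ _ _ hcanvas (ncard_lt_ncard (hBS.ssubset_of_ne hB) h.finite)
  have hψL := hψ.mono_list (precolor_subset fun v hv ↦ hφ.1 v (hcdA hv.2))
  refine hAB ▸ (hφ.mono_graph hle).glue (hψL.mono_graph hle) (fun v hv ↦ ?_) hsep
  have hvφ := hψ.1 v hv.2
  rw [precolor_of_mem L φ (hcd ▸ hv)] at hvφ
  exact (Finset.mem_singleton.1 hvφ).symm

end IsApexCanvas

end Canvas

section LinkOfApex

variable {V α : Type*} {G : SimpleGraph V} {S P : Set V} {x : V} {L : V → Finset α}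

lemma exists_forall_adj_eq_of_isAcyclic [Finite V] [Nonempty V] (hG : G.IsAcyclic) :
    ∃ v y, ∀ u, G.Adj v u → u = y := by
  obtain ⟨v, w, p, hp, hmax⟩ := SimpleGraph.Walk.exists_isPath_forall_isPath_length_le_length G
  refine ⟨v, p.snd, fun u hvu ↦ hG.eq_snd_of_adj_start hp hvu ?_⟩
  by_contra hu
  have := hmax _ _ _ (hp.cons (h := hvu.symm) hu)
  simp at this

namespace IsApexCanvas

lemma listColorableOn_of_ncard_eq_two (h : IsApexCanvas G S x P L)
    (ih : ColorableBelow V α S.ncard) (hP : P.Nonempty)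
    (hcycle : ∀ v ∈ S, G.Adj x v → (S ∩ G.neighborSet x ∩ G.neighborSet v).ncard = 2) :
    ListColorableOn G S L := by
  obtain ⟨p, hp⟩ := hP
  obtain ⟨hpS, hxp⟩ := h.precolored_subset hp
  obtain ⟨q, ⟨⟨hqS, hxq⟩, hpq⟩, hqP⟩ : ∃ q ∈ S ∩ G.neighborSet x ∩ G.neighborSet p, q ∉ P := by
    by_contra! hsub
    have hcard := ncard_insert_of_notMem (s := S ∩ G.neighborSet x ∩ G.neighborSet p)
      (fun hpp ↦ G.irrefl hpp.2) (finite_of_ncard_pos (by simp [hcycle p hpS hxp]))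
    have hle := (encard_le_encard (insert_subset hp hsub)).trans h.encard_le
    rw [← Finite.cast_ncard_eq (h.precolored_finite.subset (insert_subset hp hsub)), hcard,
      hcycle p hpS hxp] at hle
    norm_num at hle
  obtain ⟨y, hy⟩ : ∃ y, (S ∩ G.neighborSet x ∩ G.neighborSet q) \ {p} = {y} := by
    have hpq' : p ∈ S ∩ G.neighborSet x ∩ G.neighborSet q :=
      ⟨⟨hpS, hxp⟩, SimpleGraph.Adj.symm hpq⟩
    rw [← ncard_eq_one, ncard_sdiff_singleton_of_mem hpq', hcycle q hqS hxq]
  refine h.listColorableOn_of_contract ih hqS hxq hqP (h.card_precolored p hp).le y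
    fun u hu hxu hqu huy ↦ ?_
  have hup : u = p := by
    by_contra hup
    exact huy (hy.subset ⟨⟨⟨hu, hxu⟩, hqu⟩, hup⟩)
  rw [hup]

lemma subsingleton_precolored_neighbors (h : IsApexCanvas G S x P L)
    (hforest : (G.induce (S ∩ G.neighborSet x)).IsAcyclic) {v : V}
    (hv : v ∈ S ∩ G.neighborSet x) : {p ∈ P | G.Adj v p}.Subsingleton := by
  classical
  rintro p ⟨hp, hvp⟩ q ⟨hq, hvq⟩
  by_contra hpq
  let N := S ∩ G.neighborSet x
  let v' : N := ⟨v, hv⟩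
  let p' : N := ⟨p, h.precolored_subset hp⟩
  let q' : N := ⟨q, h.precolored_subset hq⟩
  have htriangle : (G.induce N).IsNClique 3 {v', p', q'} :=
    SimpleGraph.is3Clique_triple_iff.2 ⟨hvp, hvq, h.isClique hp hq hpq⟩
  exact hforest.cliqueFree le_rfl _ htriangle

lemma listColorableOn_of_isAcyclic [Nonempty α] (h : IsApexCanvas G S x P L)
    (ih : ColorableBelow V α S.ncard)
    (hforest : (G.induce (S ∩ G.neighborSet x)).IsAcyclic) : ListColorableOn G S L := by
  by_cases hNP : ∀ v ∈ S, G.Adj x v → v ∈ P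
  · exact h.listColorableOn_of_forall_adj_mem ih hNP
  push Not at hNP
  obtain ⟨w, hw, hxw, hwP⟩ := hNP
  have hsub : (S ∩ G.neighborSet x) \ P ⊆ S ∩ G.neighborSet x := sdiff_subset
  have : Finite ↑((S ∩ G.neighborSet x) \ P) :=
    (h.finite.subset (hsub.trans inter_subset_left)).to_subtype
  have : Nonempty ↑((S ∩ G.neighborSet x) \ P) := ⟨⟨w, ⟨hw, hxw⟩, hwP⟩⟩
  obtain ⟨⟨v, ⟨hvS, hxv⟩, hvP⟩, y, hy⟩ :=
    exists_forall_adj_eq_of_isAcyclic (hforest.embedding (G.induceHomOfLE hsub))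
  have hvN : v ∈ S ∩ G.neighborSet x := ⟨hvS, hxv⟩
  have hnbr (u : V) (hu : u ∈ S) (hxu : G.Adj x u) (hvu : G.Adj v u) (huy : u ≠ y) :
      u ∈ {p ∈ P | G.Adj v p} := by
    refine ⟨?_, hvu⟩
    by_contra huP
    exact huy (congrArg Subtype.val (hy ⟨u, ⟨hu, hxu⟩, huP⟩ hvu))
  rcases {p ∈ P | G.Adj v p}.eq_empty_or_nonempty with hempty | ⟨p, hp⟩
  · refine h.listColorableOn_of_contract (T := ∅) ih hvS hxv hvP (by simp) y ?_
    exact fun u hu hxu hvu huy ↦ absurd (hempty ▸ hnbr u hu hxu hvu huy) (notMem_empty u)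
  · refine h.listColorableOn_of_contract ih hvS hxv hvP (h.card_precolored p hp.1).le y ?_
    intro u hu hxu hvu huy
    rw [h.subsingleton_precolored_neighbors hforest hvN (hnbr u hu hxu hvu huy) hp]

end IsApexCanvas

end LinkOfApex

/-! ### Cycles and components -/

section Cycle

variable {V : Type*} {G : SimpleGraph V}

lemma isChordless_of_length_eq_girth {a : V} {c : G.Walk a a} (hc : c.IsCycle)
    (hlen : c.length = G.girth) : c.IsChordless := by
  classical
  refine SimpleGraph.Walk.isChordless_iff_forall_mem_edges.2 fun u v hu hv huv ↦ ?_
  have hv' : v ∈ (c.rotate u hu).support := (c.mem_support_rotate_iff u hu).2 hv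
  have mem_edges_of_mem_rotate {e : Sym2 V} (he : e ∈ (c.rotate u hu).edges) : e ∈ c.edges :=
    (c.rotate_edges u hu).mem_iff.1 he
  set p := (c.rotate u hu).takeUntil v hv'
  have hsum : p.length + ((c.rotate u hu).dropUntil v hv').length = G.girth := by
    rw [← SimpleGraph.Walk.length_append, SimpleGraph.Walk.take_spec,
      SimpleGraph.Walk.length_rotate, hlen]
  by_contra hchord
  have hcycle : (SimpleGraph.Walk.cons huv.symm p).IsCycle := by
    refine (SimpleGraph.Walk.cons_isCycle_iff _ _).2
      ⟨(hc.rotate hu).isPath_takeUntil hv', fun hmem ↦ hchord ?_⟩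
    rw [Sym2.eq_swap]
    exact mem_edges_of_mem_rotate ((c.rotate u hu).edges_takeUntil_subset_edges hv' hmem)
  have hgirth := hcycle.girth_le_length
  rw [SimpleGraph.Walk.length_cons] at hgirth
  have hdrop : s(u, v) ∈ ((c.rotate u hu).dropUntil v hv').edges := by
    rw [SimpleGraph.Walk.eq_of_length_le_one (p := (c.rotate u hu).dropUntil v hv')
      (q := huv.symm.toWalk) (by lia) huv.symm.length_toWalk.le]
    simp [Sym2.eq_swap]
  exact hchord (mem_edges_of_mem_rotate ((c.rotate u hu).edges_dropUntil_subset_edges hv' hdrop))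

lemma exists_isPath_of_isCycle {a v : V} {c : G.Walk a a} (hc : c.IsCycle) (hv : v ∈ c.support) :
    ∃ (b b' : V) (p : G.Walk b b'), p.IsPath ∧ v ∉ p.support ∧ G.Adj v b ∧ G.Adj v b' ∧ b ≠ b' ∧
      ∀ u, u ∈ c.support ↔ u = v ∨ u ∈ p.support := by
  classical
  have hcycle := hc.rotate hv
  have hsupp (u : V) : u ∈ (c.rotate v hv).support ↔ u ∈ c.support := c.mem_support_rotate_iff v hv
  generalize c.rotate v hv = c' at hcycle hsupp
  match c' with
  | .nil => exact absurd hcycle SimpleGraph.Walk.not_isCycle_nil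
  | @SimpleGraph.Walk.cons _ _ _ b _ hvb p =>
    obtain ⟨hp, hedge⟩ := (SimpleGraph.Walk.cons_isCycle_iff p hvb).1 hcycle
    have hnil : ¬p.Nil := SimpleGraph.Walk.not_nil_of_ne hvb.ne'
    have hpsupp := (SimpleGraph.Walk.support_dropLast_concat hnil).symm
    have hnodup := hpsupp ▸ hp.support_nodup
    refine ⟨b, p.penultimate, p.dropLast, hp.dropLast, ?_, hvb, (p.adj_penultimate hnil).symm, ?_,
      fun u ↦ ?_⟩
    · exact fun hmem ↦ (List.nodup_append.1 hnodup).2.2 v hmem v (List.mem_singleton_self v) rfl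
    · intro hb
      have hlast := p.mk_penultimate_end_mem_edges hnil
      rw [← hb, Sym2.eq_swap] at hlast
      exact hedge hlast
    · rw [← hsupp u, SimpleGraph.Walk.support_cons, hpsupp]
      simp only [List.mem_cons, List.mem_append, List.not_mem_nil, or_false]
      tauto

lemma exists_bipartition_of_isPath {b b' p₁ p₂ : V} {p : G.Walk b b'} (hp : p.IsPath)
    (h₁ : p₁ ∈ p.support) (h₂ : p₂ ∈ p.support) (hne : p₁ ≠ p₂) :
    ∃ A A' : Set V, A ⊆ {v | v ∈ p.support} ∧ A' ⊆ {v | v ∈ p.support} ∧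
      (G.induce A).Connected ∧ (G.induce A').Connected ∧ Disjoint A A' ∧
      (∃ a ∈ A, ∃ a' ∈ A', G.Adj a a') ∧ b ∈ A ∧ b' ∈ A' ∧
      (p₁ ∈ A ∧ p₂ ∈ A' ∨ p₂ ∈ A ∧ p₁ ∈ A') := by
  induction p with
  | nil =>
    rw [SimpleGraph.Walk.mem_support_nil_iff] at h₁ h₂
    exact absurd (h₁.trans h₂.symm) hne
  | @cons b c b' hbc p ih =>
    obtain ⟨hp, hb⟩ := (SimpleGraph.Walk.cons_isPath_iff hbc p).1 hp
    have hsub : {v | v ∈ p.support} ⊆ {v | v ∈ (SimpleGraph.Walk.cons hbc p).support} :=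
      fun v hv ↦ List.mem_cons_of_mem b hv
    have hbmem : b ∈ {v | v ∈ (SimpleGraph.Walk.cons hbc p).support} := List.mem_cons_self
    rw [SimpleGraph.Walk.support_cons, List.mem_cons] at h₁ h₂
    by_cases hsplit : p₁ ∈ p.support ∧ p₂ ∈ p.support
    · obtain ⟨A, A', hA, hA', hconn, hconn', hdisj, hadj, hcA, hb'A', hmem⟩ :=
        ih hp hsplit.1 hsplit.2
      have hsing := connected_induce_singleton G b
      refine ⟨{b} ∪ A, A', union_subset (singleton_subset_iff.2 hbmem) (hA.trans hsub),
        hA'.trans hsub, SimpleGraph.connected_induce_union hsing.preconnected hconn.preconnected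
          rfl hcA hbc, hconn', disjoint_union_left.2 ⟨disjoint_singleton_left.2 fun h ↦ hb (hA' h),
          hdisj⟩, ?_, .inl rfl, hb'A', hmem.imp (.imp_left .inr) (.imp_left .inr)⟩
      obtain ⟨a, ha, a', ha', haa'⟩ := hadj
      exact ⟨a, .inr ha, a', ha', haa'⟩
    · refine ⟨{b}, {v | v ∈ p.support}, singleton_subset_iff.2 hbmem, hsub,
        connected_induce_singleton G b, p.connected_induce_support,
        disjoint_singleton_left.2 hb, ⟨b, rfl, c, p.start_mem_support, hbc⟩, rfl,
        p.end_mem_support, ?_⟩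
      simp only [mem_singleton_iff, mem_ofPred_eq]
      grind

lemma exists_isCliqueModel_of_isCycle {a v p₁ p₂ : V} {c : G.Walk a a} (hc : c.IsCycle)
    (hv : v ∈ c.support) (h₁ : p₁ ∈ c.support) (h₂ : p₂ ∈ c.support) (hv₁ : p₁ ≠ v) (hv₂ : p₂ ≠ v)
    (hne : p₁ ≠ p₂) :
    ∃ B : Fin 3 → Set V, IsCliqueModel G B ∧ (∀ i, B i ⊆ {u | u ∈ c.support}) ∧
      ∀ i, v ∈ B i ∨ p₁ ∈ B i ∨ p₂ ∈ B i := by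
  obtain ⟨b, b', p, hp, hvp, hvb, hvb', -, hsupp⟩ := exists_isPath_of_isCycle hc hv
  obtain ⟨A, A', hA, hA', hconn, hconn', hdisj, hadj, hb, hb', hmem⟩ :=
    exists_bipartition_of_isPath hp (((hsupp p₁).1 h₁).resolve_left hv₁)
      (((hsupp p₂).1 h₂).resolve_left hv₂) hne
  have hsub : {u | u ∈ p.support} ⊆ {u | u ∈ c.support} := fun u hu ↦ (hsupp u).2 (.inr hu)
  have hA'model := (isCliqueModel_elim0 G).cons hconn' (fun i ↦ i.elim0) fun i ↦ i.elim0
  have hAmodel := hA'model.cons hconn (Fin.forall_fin_one.2 hdisj) (Fin.forall_fin_one.2 hadj)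
  refine ⟨_, hAmodel.cons (connected_induce_singleton G v) (Fin.forall_fin_two.2
    ⟨disjoint_singleton_left.2 fun h ↦ hvp (hA h), disjoint_singleton_left.2 fun h ↦ hvp (hA' h)⟩)
    (Fin.forall_fin_two.2 ⟨⟨v, rfl, b, hb, hvb⟩, ⟨v, rfl, b', hb', hvb'⟩⟩), ?_, ?_⟩
  · exact Fin.forall_fin_succ.2 ⟨singleton_subset_iff.2 hv,
      Fin.forall_fin_two.2 ⟨hA.trans hsub, hA'.trans hsub⟩⟩
  · refine Fin.forall_fin_succ.2 ⟨.inl rfl, Fin.forall_fin_two.2 ⟨?_, ?_⟩⟩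
    · exact .inr (hmem.imp And.left And.left)
    · exact .inr (hmem.symm.imp And.right And.right)

lemma exists_connected_component (G : SimpleGraph V) {T : Set V} {w : V} (hw : w ∈ T) :
    ∃ D ⊆ T, w ∈ D ∧ (G.induce D).Connected ∧ ∀ a ∈ D, ∀ b ∈ T, G.Adj a b → b ∈ D := by
  classical
  let D : Set V := {v | ∃ hv : v ∈ T, (G.induce T).Reachable ⟨w, hw⟩ ⟨v, hv⟩}
  have hwD : w ∈ D := ⟨hw, .rfl⟩
  refine ⟨D, fun v hv ↦ hv.1, hwD, ?_, ?_⟩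
  · refine SimpleGraph.induce_connected_of_patches w hwD fun {v} ⟨hv, ⟨p⟩⟩ ↦ ?_
    let q : G.Walk w v := p.map (SimpleGraph.Embedding.induce T).toHom
    refine ⟨{u | u ∈ q.support}, fun u hu ↦ ?_, q.start_mem_support, q.end_mem_support,
      q.connected_induce_support.preconnected _ _⟩
    obtain ⟨u', hu', rfl⟩ := List.mem_map.1 ((SimpleGraph.Walk.support_map _ p) ▸ hu)
    exact ⟨u'.2, ⟨p.takeUntil u' hu'⟩⟩
  · rintro a ⟨ha, hwa⟩ b hb hab
    exact ⟨hb, hwa.trans (SimpleGraph.Adj.reachable hab)⟩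

end Cycle

/-! ### Cycles among the neighbors of the apex -/

section ApexCycle

variable {V α : Type*} {G : SimpleGraph V} {S P D T : Set V} {a v w x : V} {L : V → Finset α}

lemma ncard_neighborSet_of_length_eq_girth {c : G.Walk a a} (hc : c.IsCycle)
    (hlen : c.length = G.girth) (hspan : ∀ v, v ∈ c.support) (v : V) :
    (G.neighborSet v).ncard = 2 := by
  rw [← hc.ncard_neighborSet_toSubgraph_eq_two (hspan v)]
  congr 1
  refine Subset.antisymm (fun u hvu ↦ ?_) (c.toSubgraph.neighborSet_subset v)
  exact SimpleGraph.Walk.isInduced_toSubgraph.2 (isChordless_of_length_eq_girth hc hlen)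
    (c.mem_verts_toSubgraph.2 (hspan v)) (c.mem_verts_toSubgraph.2 (hspan u)) hvu

lemma hasCliqueMinorOn_five_of_isCycle {c : G.Walk a a} (hc : c.IsCycle)
    (hxc : ∀ v ∈ c.support, G.Adj x v) (hD : (G.induce D).Connected)
    (hDc : ∀ v ∈ D, v ∉ c.support) (hxD : x ∉ D) (hw : w ∈ D) (hxw : G.Adj x w)
    (hatt : 2 < {v | v ∈ c.support ∧ ∃ z ∈ D, G.Adj z v}.ncard) :
    HasCliqueMinorOn 5 G (insert x ({v | v ∈ c.support} ∪ D)) := by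
  obtain ⟨v, p₁, p₂, ⟨hv, hDv⟩, ⟨h₁, hD₁⟩, ⟨h₂, hD₂⟩, hv₁, hv₂, hne⟩ :=
    (two_lt_ncard_iff (finite_of_ncard_pos (by lia))).1 hatt
  obtain ⟨B, hB, hBc, hBatt⟩ :=
    exists_isCliqueModel_of_isCycle hc hv h₁ h₂ hv₁.symm hv₂.symm hne
  have hxB (i) : x ∉ B i := fun hx ↦ G.irrefl (hxc x (hBc i hx))
  have hDB (i) : ∃ z ∈ D, ∃ u ∈ B i, G.Adj z u := by
    rcases hBatt i with hi | hi | hi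
    · exact let ⟨z, hz, hzv⟩ := hDv; ⟨z, hz, v, hi, hzv⟩
    · exact let ⟨z, hz, hz₁⟩ := hD₁; ⟨z, hz, p₁, hi, hz₁⟩
    · exact let ⟨z, hz, hz₂⟩ := hD₂; ⟨z, hz, p₂, hi, hz₂⟩
  have hmodel := (hB.cons hD (fun i ↦ disjoint_left.2 fun u hu hi ↦ hDc u hu (hBc i hi)) hDB).cons
    (connected_induce_singleton G x)
    (Fin.forall_fin_succ.2 ⟨disjoint_singleton_left.2 hxD,
      fun i ↦ disjoint_singleton_left.2 (hxB i)⟩)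
    (Fin.forall_fin_succ.2 ⟨⟨x, rfl, w, hw, hxw⟩, fun i ↦
      let ⟨_, _, u, hu, _⟩ := hDB i; ⟨x, rfl, u, hu, hxc u (hBc i hu)⟩⟩)
  refine ⟨_, hmodel, Fin.forall_fin_succ.2 ⟨singleton_subset_iff.2 (mem_insert _ _),
    Fin.forall_fin_succ.2 ⟨subset_union_right.trans (subset_insert _ _), fun i ↦ ?_⟩⟩⟩
  exact ((hBc i).trans subset_union_left).trans (subset_insert _ _)

lemma exists_pair_of_ncard_le_two {c : G.Walk a a} (hc : c.IsCycle)
    (hTc : ∀ v ∈ T, v ∈ c.support) (hT : T.ncard ≤ 2) :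
    ∃ p ∈ c.support, ∃ q ∈ c.support, p ≠ q ∧ T ⊆ {p, q} ∧ (T = {p, q} ∨ G.Adj p q) := by
  rcases hT.eq_or_lt with hT | hT
  · obtain ⟨p, q, hpq, rfl⟩ := ncard_eq_two.1 hT
    exact ⟨p, hTc p (by simp), q, hTc q (by simp), hpq, subset_rfl, .inl rfl⟩
  · obtain ⟨p, hp, hTp⟩ : ∃ p ∈ c.support, T ⊆ {p} := by
      have : Finite T := (c.support.finite_toSet.subset hTc).to_subtype
      rcases (ncard_le_one_iff_subsingleton.1 (Nat.lt_succ_iff.1 hT)).eq_empty_or_singleton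
        with rfl | ⟨p, rfl⟩
      · exact ⟨a, c.start_mem_support, empty_subset _⟩
      · exact ⟨p, hTc p rfl, subset_rfl⟩
    obtain ⟨q, _, r, -, -, hpq, -, -, hsupp⟩ := exists_isPath_of_isCycle hc hp
    exact ⟨p, hp, q, (hsupp q).2 (.inr r.start_mem_support), hpq.ne,
      hTp.trans (singleton_subset_iff.2 (mem_insert _ _)), .inr hpq⟩

lemma exists_mem_support_ne_ne {c : G.Walk a a} (hc : c.IsCycle) (hv : v ∈ c.support) (u : V) :
    ∃ y ∈ c.support, y ≠ u ∧ y ≠ v := by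
  obtain ⟨b, b', r, -, -, hvb, hvb', hbb', hsupp⟩ := exists_isPath_of_isCycle hc hv
  rcases eq_or_ne b u with rfl | hbu
  · exact ⟨b', (hsupp b').2 (.inr r.end_mem_support), hbb'.symm, hvb'.ne'⟩
  · exact ⟨b, (hsupp b).2 (.inr r.start_mem_support), hbu, hvb.ne'⟩

namespace IsApexCanvas

lemma not_hasCliqueMinorOn_sdiff (h : IsApexCanvas G S x P L) {c d : V} {D : Set V}
    (hD : (G.induce D).Connected) (hDS : D ⊆ S) (hc : c ∈ S) (hcd : c ≠ d)
    (hadj : (∃ z ∈ D, G.Adj z c) ∧ (∃ z ∈ D, G.Adj z d) ∨ G.Adj c d) :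
    ¬HasCliqueMinorOn 5 (G ⊔ SimpleGraph.edge c d) (insert x (S \ D)) := by
  refine fun hminor ↦ h.no_minor ?_
  have hsub : insert x (S \ D) ⊆ insert x S := insert_subset_insert sdiff_subset
  rcases hadj with ⟨⟨z, hz, hzc⟩, z', hz', hzd⟩ | hcd
  · refine hminor.of_sup_edge (M := {c} ∪ D) ?_ (.inl rfl) (.inr hz') hzd
      (union_subset (singleton_subset_iff.2 (.inr hc)) (hDS.trans (subset_insert _ _))) hsub ?_
    · exact SimpleGraph.connected_induce_union (connected_induce_singleton G c).preconnected
        hD.preconnected rfl hz hzc.symm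
    · rintro y hy (rfl | hyD)
      · rfl
      · rcases hy with rfl | hy
        · exact absurd (hDS hyD) h.apex_notMem
        · exact absurd hyD hy.2
  · rw [SimpleGraph.sup_edge_of_adj _ hcd] at hminor
    exact hminor.mono hsub

lemma not_hasCliqueMinorOn_union_pair (h : IsApexCanvas G S x P L) {p q : V}
    {c : G.Walk a a} (hc : c.IsCycle) (hcS : ∀ v ∈ c.support, v ∈ S) (hDS : D ⊆ S)
    (hDc : ∀ v ∈ D, v ∉ c.support) (hp : p ∈ c.support) (hq : q ∈ c.support) (hpq : p ≠ q) :
    ¬HasCliqueMinorOn 5 (G ⊔ SimpleGraph.edge p q) (insert x (D ∪ {p, q})) := by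
  obtain ⟨b, b', r, -, hqr, hqb, -, -, hsupp⟩ := exists_isPath_of_isCycle hc hq
  refine fun hminor ↦ h.no_minor (hminor.of_sup_edge r.connected_induce_support
    (((hsupp p).1 hp).resolve_left hpq) r.start_mem_support hqb.symm
    (fun v hv ↦ .inr (hcS v ((hsupp v).2 (.inr hv)))) ?_ ?_)
  · exact insert_subset_insert (union_subset hDS (pair_subset (hcS p hp) (hcS q hq)))
  · rintro y (rfl | hyD | rfl | rfl) hyr
    · exact absurd (hcS y ((hsupp y).2 (.inr hyr))) h.apex_notMem
    · exact absurd ((hsupp y).2 (.inr hyr)) (hDc y hyD)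
    · rfl
    · exact absurd hyr hqr

lemma exists_separating_pair (h : IsApexCanvas G S x P L) {c : G.Walk a a} (hc : c.IsCycle)
    (hcN : ∀ v ∈ c.support, v ∈ S ∩ G.neighborSet x) (hw : w ∈ S) (hxw : G.Adj x w)
    (hwc : w ∉ c.support) :
    ∃ D ⊆ S, w ∈ D ∧ (G.induce D).Connected ∧ (∀ v ∈ D, v ∉ c.support) ∧
      ∃ p ∈ c.support, ∃ q ∈ c.support, p ≠ q ∧
        (∀ z ∈ D, ∀ y ∈ S, G.Adj z y → y ∈ D ∪ {p, q}) ∧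
        ((∃ z ∈ D, G.Adj z p) ∧ (∃ z ∈ D, G.Adj z q) ∨ G.Adj p q) := by
  obtain ⟨D, hDsub, hwD, hD, hDcomp⟩ :=
    exists_connected_component G (T := {v ∈ S | v ∉ c.support}) ⟨hw, hwc⟩
  have hDS : D ⊆ S := fun v hv ↦ (hDsub hv).1
  have hDc : ∀ v ∈ D, v ∉ c.support := fun v hv ↦ (hDsub hv).2
  have hatt : {v | v ∈ c.support ∧ ∃ z ∈ D, G.Adj z v}.ncard ≤ 2 := by
    by_contra! hatt
    exact h.no_minor ((hasCliqueMinorOn_five_of_isCycle hc (fun v hv ↦ (hcN v hv).2) hD hDc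
      (fun hx ↦ h.apex_notMem (hDS hx)) hwD hxw hatt).mono
        (insert_subset_insert (union_subset (fun v hv ↦ (hcN v hv).1) hDS)))
  obtain ⟨p, hp, q, hq, hpq, hattpq, hadj⟩ :=
    exists_pair_of_ncard_le_two hc (fun v hv ↦ hv.1) hatt
  refine ⟨D, hDS, hwD, hD, hDc, p, hp, q, hq, hpq, fun z hz y hy hzy ↦ ?_, hadj.imp_left ?_⟩
  · by_cases hyc : y ∈ c.support
    · exact .inr (hattpq ⟨hyc, z, hz, hzy⟩)
    · exact .inl (hDcomp z hz y ⟨hy, hyc⟩ hzy)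
  · exact fun hatt ↦ ⟨(hatt.symm.subset (by simp)).2, (hatt.symm.subset (by simp)).2⟩

lemma listColorableOn_of_isCycle_of_notMem (h : IsApexCanvas G S x P L)
    (ih : ColorableBelow V α S.ncard) {c : G.Walk a a} (hc : c.IsCycle)
    (hcN : ∀ v ∈ c.support, v ∈ S ∩ G.neighborSet x) (hw : w ∈ S) (hxw : G.Adj x w)
    (hwc : w ∉ c.support) : ListColorableOn G S L := by
  obtain ⟨D, hDS, hwD, hD, hDc, p, hp, q, hq, hpq, hclosed, hadj⟩ :=
    h.exists_separating_pair hc hcN hw hxw hwc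
  have hcS : ∀ v ∈ c.support, v ∈ S := fun v hv ↦ (hcN v hv).1
  have hpqS : {p, q} ⊆ S \ D :=
    pair_subset ⟨hcS p hp, fun hpD ↦ hDc p hpD hp⟩ ⟨hcS q hq, fun hqD ↦ hDc q hqD hq⟩
  have hunion : S \ D ∪ (D ∪ {p, q}) = S := by
    rw [← union_assoc, sdiff_union_of_subset hDS, union_eq_self_of_subset_right
      (hpqS.trans sdiff_subset)]
  have hinter : (S \ D) ∩ (D ∪ {p, q}) = {p, q} := by
    rw [inter_union_distrib_left, sdiff_inter_self, empty_union, inter_eq_self_of_subset_right hpqS]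
  have hA : S \ D ≠ S := fun hS ↦ (hS.symm.subset hw).2 hwD
  have hB : D ∪ {p, q} ≠ S := by
    obtain ⟨y, hy, hyp, hyq⟩ := exists_mem_support_ne_ne hc hq p
    exact fun hS ↦ (hS.symm.subset (hcS y hy)).elim (fun hyD ↦ hDc y hyD hy) (by simp [hyp, hyq])
  have hsep : ∀ z ∈ (D ∪ {p, q}) \ (S \ D), ∀ y ∈ (S \ D) \ (D ∪ {p, q}), ¬G.Adj z y :=
    fun z hz y hy hzy ↦
      hy.2 (hclosed z (hz.1.resolve_right fun hzpq ↦ hz.2 (hpqS hzpq)) y hy.1.1 hzy)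
  have hAminor := h.not_hasCliqueMinorOn_sdiff hD hDS (hcS p hp) hpq hadj
  have hBminor := h.not_hasCliqueMinorOn_union_pair hc hcS hDS hDc hp hq hpq
  by_cases hPA : P ⊆ S \ D
  · exact h.listColorableOn_of_separation ih hunion hinter hpq (hcN p hp).2 (hcN q hq).2 hPA hA hB
      (fun y hy z hz hyz ↦ hsep z hz y hy hyz.symm) hAminor hBminor
  · obtain ⟨r, hrP, hr⟩ := not_subset.1 hPA
    have hPS : P ⊆ S := h.precolored_subset.trans inter_subset_left
    have hrD : r ∈ D := not_not.1 fun hrD ↦ hr ⟨hPS hrP, hrD⟩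
    have hPB : P ⊆ D ∪ {p, q} := fun y hy ↦ by
      rcases eq_or_ne r y with rfl | hry
      · exact .inl hrD
      · exact hclosed r hrD y (hPS hy) (h.isClique hrP hy hry)
    exact h.listColorableOn_of_separation ih (union_comm .. ▸ hunion) (inter_comm .. ▸ hinter) hpq
      (hcN p hp).2 (hcN q hq).2 hPB hB hA hsep hBminor hAminor

lemma listColorableOn_of_length_eq_girth (h : IsApexCanvas G S x P L)
    (ih : ColorableBelow V α S.ncard) {a : ↑(S ∩ G.neighborSet x)}
    {c : (G.induce (S ∩ G.neighborSet x)).Walk a a} (hc : c.IsCycle)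
    (hlen : c.length = (G.induce (S ∩ G.neighborSet x)).girth) (hspan : ∀ v, v ∈ c.support) :
    ListColorableOn G S L := by
  have hcycle : ∀ v ∈ S, G.Adj x v → (S ∩ G.neighborSet x ∩ G.neighborSet v).ncard = 2 := by
    intro v hv hxv
    rw [← ncard_neighborSet_of_length_eq_girth hc hlen hspan ⟨v, hv, hxv⟩,
      ← ncard_image_of_injective _ Subtype.val_injective]
    congr 1
    ext u
    simpa [and_assoc] using and_rotate.symm
  rcases P.eq_empty_or_nonempty with rfl | hP
  · obtain ⟨b, hb⟩ := h.list_nonempty a.2.1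
    have hcanvas := h.precolor (φ := fun _ ↦ b) (empty_subset {↑a}) (singleton_subset_iff.2 a.2)
      (SimpleGraph.isClique_singleton _) (by simp) (injOn_singleton _ _)
    obtain ⟨φ, hφ⟩ := hcanvas.listColorableOn_of_ncard_eq_two ih (singleton_nonempty _) hcycle
    exact ⟨φ, hφ.mono_list (precolor_subset fun v hv ↦ by rwa [mem_singleton_iff.1 hv.2])⟩
  · exact h.listColorableOn_of_ncard_eq_two ih hP hcycle

end IsApexCanvas

theorem IsApexCanvas.listColorableOn [Nonempty α] (h : IsApexCanvas G S x P L) :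
    ListColorableOn G S L := by
  have key (n : ℕ) : ColorableBelow V α n := by
    induction n with
    | zero => exact fun _ _ _ _ _ _ hS ↦ absurd hS (Nat.not_lt_zero _)
    | succ n ih =>
      intro G S x P L h hS
      have ih : ColorableBelow V α S.ncard := fun G' S' x' P' L' h' hS' ↦
        ih G' S' x' P' L' h' (hS'.trans_le (Nat.lt_succ_iff.1 hS))
      by_cases hforest : (G.induce (S ∩ G.neighborSet x)).IsAcyclic
      · exact h.listColorableOn_of_isAcyclic ih hforest
      obtain ⟨a, c, hc, hlen⟩ := SimpleGraph.exists_girth_eq_length.2 hforest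
      by_cases hspan : ∀ v, v ∈ c.support
      · exact h.listColorableOn_of_length_eq_girth ih hc hlen.symm hspan
      push Not at hspan
      obtain ⟨w, hwc⟩ := hspan
      refine h.listColorableOn_of_isCycle_of_notMem ih
        (hc.map (f := (SimpleGraph.Embedding.induce _).toHom) Subtype.val_injective) ?_ w.2.1 w.2.2
        ?_
      · intro v hv
        rw [SimpleGraph.Walk.support_map] at hv
        obtain ⟨v', -, rfl⟩ := List.mem_map.1 hv
        exact v'.2
      · rw [SimpleGraph.Walk.support_map]
        exact fun hmem ↦ hwc ((List.mem_map_of_injective Subtype.val_injective).1 hmem)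
  exact key _ G S x P L h (Nat.lt_succ_self _)

end ApexCycle

/-! ### Logarithms along curves -/

section LogIncrement

lemma exists_continuous_log {A : Type*} [TopologicalSpace A] [SimplyConnectedSpace A]
    [LocallyPathConnectedSpace A] {f : A → ℂ} (hf : Continuous f) (hf₀ : ∀ a, f a ≠ 0) :
    ∃ h : A → ℂ, Continuous h ∧ ∀ a, Complex.exp (h a) = f a := by
  obtain ⟨a⟩ : Nonempty A := inferInstance
  obtain ⟨h, ⟨-, hexp⟩, -⟩ := Complex.isCoveringMap_exp.existsUnique_continuousMap_lifts
    (⟨fun a ↦ (⟨f a, hf₀ a⟩ : {z : ℂ // z ≠ 0}), by fun_prop⟩ : C(A, {z : ℂ // z ≠ 0}))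
    a (Complex.log (f a)) (by simp [Complex.exp_log (hf₀ _)])
  exact ⟨h, h.continuous, fun a ↦ congrArg Subtype.val (congrFun hexp a)⟩

lemma sub_eq_sub_of_exp_eq_exp {A : Type*} [TopologicalSpace A] [PreconnectedSpace A]
    {h h' : A → ℂ} (hh : Continuous h) (hh' : Continuous h')
    (hexp : ∀ a, Complex.exp (h a) = Complex.exp (h' a)) (a b : A) :
    h b - h a = h' b - h' a := by
  have heq : h = fun s ↦ h' s + (h a - h' a) := by
    refine Complex.isCoveringMap_exp.eq_of_comp_eq hh (by fun_prop) (funext fun s ↦ ?_) a (by ring)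
    exact Subtype.ext (by simp [Complex.exp_add, Complex.exp_sub, hexp])
  rw [congrFun heq b]
  ring

/-- The continuous logarithms of the curve `f` change by `w` between the times `0` and `1`: the
real part of `w` is the change of `log |f|`, and its imaginary part is the angle swept around the
origin. -/
def HasLogIncrement (f : ℝ → ℂ) (w : ℂ) : Prop :=
  ∃ h : ℝ → ℂ, Continuous h ∧ (∀ s, Complex.exp (h s) = f s) ∧ h 1 - h 0 = w

lemma exists_hasLogIncrement {f : ℝ → ℂ} (hf : Continuous f) (hf₀ : ∀ s, f s ≠ 0) :
    ∃ w, HasLogIncrement f w :=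
  let ⟨h, hh, hexp⟩ := exists_continuous_log hf hf₀
  ⟨_, h, hh, hexp, rfl⟩

namespace HasLogIncrement

variable {f : ℝ → ℂ} {w w' : ℂ}

lemma unique (hw : HasLogIncrement f w) (hw' : HasLogIncrement f w') : w = w' := by
  obtain ⟨h, hh, hexp, rfl⟩ := hw
  obtain ⟨h', hh', hexp', rfl⟩ := hw'
  exact sub_eq_sub_of_exp_eq_exp hh hh' (fun s ↦ (hexp s).trans (hexp' s).symm) 0 1

lemma exp_eq (hw : HasLogIncrement f w) : Complex.exp w = f 1 / f 0 := by
  obtain ⟨h, -, hexp, rfl⟩ := hw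
  rw [Complex.exp_sub, hexp, hexp]

lemma neg (hw : HasLogIncrement f w) : HasLogIncrement (-f) w := by
  obtain ⟨h, hh, hexp, rfl⟩ := hw
  refine ⟨fun s ↦ h s + Real.pi * Complex.I, by fun_prop, fun s ↦ ?_, by ring⟩
  simp [Complex.exp_add, hexp]

/-- Both sides are the increment of a logarithm of `(s, t) ↦ α s - β t` from one corner of the unit
square to the opposite one. -/
lemma add_eq_add {α β : ℝ → ℂ} (hα : Continuous α) (hβ : Continuous β)
    (hne : ∀ s t, α s ≠ β t) {w₀ w₁ z₀ z₁ : ℂ}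
    (hw₀ : HasLogIncrement (fun s ↦ α s - β 0) w₀) (hw₁ : HasLogIncrement (fun s ↦ α s - β 1) w₁)
    (hz₀ : HasLogIncrement (fun t ↦ β t - α 0) z₀) (hz₁ : HasLogIncrement (fun t ↦ β t - α 1) z₁) :
    w₀ + z₁ = z₀ + w₁ := by
  obtain ⟨h, hh, hexp⟩ := exists_continuous_log (f := fun q : ℝ × ℝ ↦ α q.1 - β q.2)
    (by fun_prop) fun q ↦ sub_ne_zero.2 (hne _ _)
  rw [hw₀.unique ⟨fun s ↦ h (s, 0), by fun_prop, fun s ↦ hexp _, rfl⟩,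
    hw₁.unique ⟨fun s ↦ h (s, 1), by fun_prop, fun s ↦ hexp _, rfl⟩,
    hz₀.neg.unique ⟨fun t ↦ h (0, t), by fun_prop, fun t ↦ by simp [hexp], rfl⟩,
    hz₁.neg.unique ⟨fun t ↦ h (1, t), by fun_prop, fun t ↦ by simp [hexp], rfl⟩]
  ring

end HasLogIncrement

lemma exp_eq_neg_one_of_exp_eq_div {ι : Type*} {p : ι → ℂ} (hp : p.Injective)
    {w : ι → ι → ι → ℂ}
    (hw : ∀ i j k, i ≠ k → j ≠ k → Complex.exp (w i j k) = (p j - p k) / (p i - p k))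
    {i j k l : ι} (hij : i ≠ j) (hik : i ≠ k) (hil : i ≠ l) (hjk : j ≠ k) (hjl : j ≠ l)
    (hkl : k ≠ l) :
    Complex.exp (w i j k + w j k i - w i k j - (w i j l + w j k l - w i k l)) = -1 := by
  have hne {a b : ι} (hab : a ≠ b) : p a - p b ≠ 0 := sub_ne_zero.2 (hp.ne hab)
  have triangle : Complex.exp (w i j k + w j k i - w i k j) = -1 := by
    rw [Complex.exp_sub, Complex.exp_add, hw i j k hik hjk, hw j k i hij.symm hik.symm,
      hw i k j hij hjk.symm, ← neg_sub (p i) (p k), ← neg_sub (p i) (p j), ← neg_sub (p j) (p k)]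
    field_simp [hne hij, hne hik, hne hjk]
  have telescope : Complex.exp (w i j l + w j k l - w i k l) = 1 := by
    rw [Complex.exp_sub, Complex.exp_add, hw i j l hil hjl, hw j k l hjl hkl, hw i k l hil hkl]
    field_simp [hne hil, hne hjl, hne hkl]
  rw [Complex.exp_sub, triangle, telescope, div_one]

/-- Put `τ i j k = w i j k + w j k i - w i k j` and `χ i j k l = τ i j k` minus the increment
`w i j l + w j k l - w i k l` around the triangle `i j k` seen from `l`. If the four-term relation
always held, `2 χ` would be the coboundary of `-τ`, so the alternating sum of the five values of `χ`
would vanish, although each of them is an odd multiple of `π I`. -/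
lemma exists_add_ne_add_of_exp_eq_div {p : Fin 5 → ℂ} (hp : p.Injective)
    {w : Fin 5 → Fin 5 → Fin 5 → ℂ}
    (hw : ∀ i j k, i ≠ k → j ≠ k → Complex.exp (w i j k) = (p j - p k) / (p i - p k)) :
    ∃ i j k l, i ≠ k ∧ i ≠ l ∧ j ≠ k ∧ j ≠ l ∧ w i j k + w k l j ≠ w k l i + w i j l := by
  by_contra! hsquare
  let τ (i j k : Fin 5) : ℂ := w i j k + w j k i - w i k j
  let χ (i j k l : Fin 5) : ℂ := τ i j k - (w i j l + w j k l - w i k l)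
  have key {i j k l : Fin 5} (hij : i < j) (hjk : j < k) (hkl : k < l) :
      Complex.exp (χ i j k l) = -1 ∧
        2 * χ i j k l = τ i j k - τ i j l + τ i k l - τ j k l := by
    have hik := hij.trans hjk
    have hjl := hjk.trans hkl
    have hil := hij.trans hjl
    refine ⟨exp_eq_neg_one_of_exp_eq_div hp hw hij.ne hik.ne hil.ne hjk.ne hjl.ne hkl.ne, ?_⟩
    linear_combination hsquare i j k l hik.ne hil.ne hjk.ne hjl.ne -
      hsquare i k j l hij.ne hil.ne hjk.ne' hkl.ne - hsquare i l j k hij.ne hik.ne hjl.ne' hkl.ne'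
  obtain ⟨exp₄, two₄⟩ := key (i := 0) (j := 1) (k := 2) (l := 3) (by decide) (by decide) (by decide)
  obtain ⟨exp₃, two₃⟩ := key (i := 0) (j := 1) (k := 2) (l := 4) (by decide) (by decide) (by decide)
  obtain ⟨exp₂, two₂⟩ := key (i := 0) (j := 1) (k := 3) (l := 4) (by decide) (by decide) (by decide)
  obtain ⟨exp₁, two₁⟩ := key (i := 0) (j := 2) (k := 3) (l := 4) (by decide) (by decide) (by decide)
  obtain ⟨exp₀, two₀⟩ := key (i := 1) (j := 2) (k := 3) (l := 4) (by decide) (by decide) (by decide)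
  have hsum : χ 0 1 2 3 - χ 0 1 2 4 + χ 0 1 3 4 - χ 0 2 3 4 + χ 1 2 3 4 = 0 := by
    linear_combination (two₄ - two₃ + two₂ - two₁ + two₀) / 2
  have hexp := congrArg Complex.exp hsum
  rw [Complex.exp_add, Complex.exp_sub, Complex.exp_add, Complex.exp_sub, exp₀, exp₁, exp₂, exp₃,
    exp₄, Complex.exp_zero] at hexp
  norm_num at hexp

theorem exists_not_disjoint_range_path {p : Fin 5 → ℂ} (γ : ∀ i j, Path (p i) (p j)) :
    ∃ i j k l, i ≠ k ∧ i ≠ l ∧ j ≠ k ∧ j ≠ l ∧ ¬Disjoint (range (γ i j)) (range (γ k l)) := by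
  by_contra! hdisj
  have hne {i j k l : Fin 5} (hik : i ≠ k) (hil : i ≠ l) (hjk : j ≠ k) (hjl : j ≠ l) (s t : ℝ) :
      (γ i j).extend s ≠ (γ k l).extend t := by
    have hd := hdisj i j k l hik hil hjk hjl
    rw [← Path.extend_range, ← Path.extend_range] at hd
    exact hd.ne_of_mem (mem_range_self s) (mem_range_self t)
  have hp {i j k : Fin 5} (hik : i ≠ k) (hjk : j ≠ k) (s : ℝ) : (γ i j).extend s - p k ≠ 0 := by
    simpa [sub_eq_zero] using hne hik hik hjk hjk s 0
  have hlog (i j k : Fin 5) : ∃ w, i ≠ k → j ≠ k →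
      HasLogIncrement (fun s ↦ (γ i j).extend s - p k) w := by
    by_cases h : i ≠ k ∧ j ≠ k
    · obtain ⟨w, hw⟩ := exists_hasLogIncrement (by fun_prop) (hp h.1 h.2)
      exact ⟨w, fun _ _ ↦ hw⟩
    · exact ⟨0, fun hik hjk ↦ absurd ⟨hik, hjk⟩ h⟩
  choose w hw using hlog
  have hinj : p.Injective := fun i k hik ↦ not_not.1 fun h ↦ hp h h 0 (by simp [hik])
  obtain ⟨i, j, k, l, hik, hil, hjk, hjl, hsquare⟩ := exists_add_ne_add_of_exp_eq_div hinj
    fun i j k hik hjk ↦ by simpa using (hw i j k hik hjk).exp_eq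
  refine hsquare (HasLogIncrement.add_eq_add (γ i j).continuous_extend (γ k l).continuous_extend
    (hne hik hil hjk hjl) ?_ ?_ ?_ ?_)
  · simpa using hw i j k hik hjk
  · simpa using hw i j l hil hjl
  · simpa using hw k l i hik.symm hil.symm
  · simpa using hw k l j hjk.symm hjl.symm

end LogIncrement

/-! ### Plane graphs -/

namespace PlaneGraph

variable {V : Type*} (G : PlaneGraph V) {T T' : Set V} {u v : V}

/-- The abstract graph underlying a plane graph. It lives on all of `V`, so the elements of `V`
outside `G.verts` are isolated vertices of it. -/
def toSimpleGraph : SimpleGraph V where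
  Adj := G.Adj
  symm := ⟨G.adj_symm⟩
  loopless := ⟨G.adj_irrefl⟩

/-- The drawing of the subgraph of `G` induced on `T`. -/
def inducedImage (T : Set V) : Set (ℝ × ℝ) := (G.deleteVerts Tᶜ).image

variable {G}

lemma mem_inducedImage {x : ℝ × ℝ} :
    x ∈ G.inducedImage T ↔ (∃ v ∈ G.verts ∩ T, G.pos v = x) ∨
      ∃ u ∈ T, ∃ v ∈ T, G.Adj u v ∧ x ∈ G.arc s(u, v) := by
  simp only [inducedImage, image, deleteVerts, sdiff_compl, mem_union, mem_image, mem_iUnion,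
    mem_compl_iff, not_not, exists_prop]
  grind

lemma pos_mem_inducedImage (hv : v ∈ G.verts) : G.pos v ∈ G.inducedImage T ↔ v ∈ T := by
  refine ⟨fun h ↦ ?_, fun h ↦ mem_inducedImage.2 (.inl ⟨v, ⟨hv, h⟩, rfl⟩)⟩
  obtain ⟨w, ⟨hw, hwT⟩, hwv⟩ | ⟨a, ha, b, hb, hab, hmem⟩ := mem_inducedImage.1 h
  · exact G.pos_injOn hw hv hwv ▸ hwT
  · obtain rfl | rfl := G.arc_avoid a b hab v hv hmem <;> assumption

lemma disjoint_inducedImage (h : Disjoint T T') :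
    Disjoint (G.inducedImage T) (G.inducedImage T') := by
  refine Set.disjoint_left.2 fun x hx hx' ↦ ?_
  obtain ⟨v, hv, rfl⟩ | ⟨a, ha, b, hb, hab, hmem⟩ := mem_inducedImage.1 hx
  · exact h.notMem_of_mem_left hv.2 ((pos_mem_inducedImage hv.1).1 hx')
  obtain ⟨v, hv, rfl⟩ | ⟨c, hc, d, hd, hcd, hmem'⟩ := mem_inducedImage.1 hx'
  · exact h.notMem_of_mem_right hv.2 ((pos_mem_inducedImage hv.1).1 hx)
  have hne : s(a, b) ≠ s(c, d) := fun heq ↦ by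
    obtain rfl | rfl := Sym2.mem_iff.1 (heq ▸ Sym2.mem_mk_left a b)
    exacts [h.notMem_of_mem_left ha hc, h.notMem_of_mem_left ha hd]
  obtain ⟨w, ⟨hw, hw'⟩, -⟩ := G.arc_meet a b c d hab hcd hne ⟨hmem, hmem'⟩
  exact h.notMem_of_mem_left (pair_subset ha hb hw) (pair_subset hc hd hw')

lemma joinedIn_inducedImage_of_adj (hu : u ∈ T) (hv : v ∈ T) (huv : G.Adj u v) :
    JoinedIn (G.inducedImage T) (G.pos u) (G.pos v) := by
  obtain ⟨f, hf, -, himage, hf₀, hf₁⟩ := G.arc_arc u v huv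
  refine JoinedIn.ofLine hf hf₀ hf₁ (himage.subset.trans fun x hx ↦ ?_)
  exact mem_inducedImage.2 (.inr ⟨u, hu, v, hv, huv, hx⟩)

lemma joinedIn_inducedImage (hT : (G.toSimpleGraph.induce T).Preconnected) (hTG : T ⊆ G.verts)
    (u v : T) : JoinedIn (G.inducedImage T) (G.pos u) (G.pos v) := by
  obtain ⟨r⟩ := hT u v
  induction r with
  | @nil u => exact JoinedIn.refl ((pos_mem_inducedImage (hTG u.2)).2 u.2)
  | @cons u v w huv _ ih => exact (joinedIn_inducedImage_of_adj u.2 v.2 huv).trans ih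

theorem not_hasCliqueMinorOn_five (G : PlaneGraph V) :
    ¬HasCliqueMinorOn 5 G.toSimpleGraph G.verts := by
  rintro ⟨B, hB, hBG⟩
  have hconn (i j : Fin 5) : (G.toSimpleGraph.induce (B i ∪ B j)).Connected := by
    rcases eq_or_ne i j with rfl | hij
    · rw [union_self]
      exact hB.connected i
    · obtain ⟨a, ha, b, hb, hab⟩ := hB.adj i j hij
      exact SimpleGraph.connected_induce_union (hB.connected i).preconnected
        (hB.connected j).preconnected ha hb hab
  choose r hr using fun i ↦ nonempty_subtype.1 (hB.connected i).nonempty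
  have hjoined (i j : Fin 5) :
      JoinedIn (G.inducedImage (B i ∪ B j)) (G.pos (r i)) (G.pos (r j)) :=
    joinedIn_inducedImage (hconn i j).preconnected (union_subset (hBG i) (hBG j))
      ⟨r i, .inl (hr i)⟩ ⟨r j, .inr (hr j)⟩
  let e := Complex.equivRealProdCLM.symm
  obtain ⟨i, j, k, l, hik, hil, hjk, hjl, hmeet⟩ :=
    exists_not_disjoint_range_path fun i j ↦ (hjoined i j).somePath.map e.continuous
  have hdisj : Disjoint (B i ∪ B j) (B k ∪ B l) := by
    simp only [disjoint_union_left, disjoint_union_right]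
    exact ⟨⟨hB.disjoint i k hik, hB.disjoint j k hjk⟩, hB.disjoint i l hil, hB.disjoint j l hjl⟩
  have hrange (i j : Fin 5) : range (hjoined i j).somePath ⊆ G.inducedImage (B i ∪ B j) :=
    range_subset_iff.2 (hjoined i j).somePath_mem
  simp only [Path.map_coe, range_comp, disjoint_image_iff e.injective] at hmeet
  exact hmeet ((disjoint_inducedImage hdisj).mono (hrange i j) (hrange k l))

end PlaneGraph

theorem planar_graphs_are_five_choosable_general {V α : Type*} [Nonempty α] {G : SimpleGraph V}
    {S : Set V} (hS : S.Finite) (hG : ¬HasCliqueMinorOn 5 G S) {L : V → Finset α}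
    (hL : ∀ v ∈ S, 5 ≤ (L v).card) : ListColorableOn G S L := by
  rcases S.eq_empty_or_nonempty with rfl | ⟨x, hx⟩
  · exact ⟨fun _ ↦ Classical.arbitrary α, by simp [IsListColoringOn]⟩
  obtain ⟨a, ha⟩ : (L x).Nonempty := Finset.card_pos.1 (Nat.zero_lt_of_lt (hL x hx))
  have card_le (v : V) (hv : v ∈ S \ {x}) :
      5 ≤ (removeColors L {a} (G.neighborSet x) v).card + 1 :=
    (hL v hv.1).trans (card_le_card_removeColors_add L {a} _ v)
  have hcanvas : IsApexCanvas G (S \ {x}) x ∅ (removeColors L {a} (G.neighborSet x)) := by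
    refine ⟨hS.sdiff, fun hx ↦ hx.2 rfl, ?_, empty_subset _, by simp, by simp, by simp, by simp,
      fun v hv _ ↦ by have := card_le v hv; lia, fun v hv hxv ↦ ?_⟩
    · rwa [insert_sdiff_singleton, insert_eq_of_mem hx]
    · rw [removeColors_of_notMem L {a} (Q := G.neighborSet x) hxv]
      exact hL v hv.1
  obtain ⟨φ, hφ⟩ := hcanvas.listColorableOn
  refine (hφ.mono_list fun v _ ↦ removeColors_subset L _ _ v).extend ha fun u hu hxu hua ↦ ?_
  exact (mem_removeColors.1 (hφ.1 u ⟨hu, hxu.ne'⟩)).2 hxu (by simp [hua])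

/-- Thomassen: every planar graph is 5-choosable; that is, for
every (finite, simple) planar graph `G`, given by a plane embedding, and every
list assignment `L` with `|L(v)| ≥ 5` for every vertex `v` of `G`, `G` has an
`L`-coloring. -/
theorem planar_graphs_are_five_choosable {V : Type u} (G : PlaneGraph V)
    (L : V → Finset ℕ)
    (h5 : ∀ v ∈ G.verts, 5 ≤ (L v).card) :
    G.HasLColoring L := by
  obtain ⟨φ, hφL, hφ⟩ :=
    planar_graphs_are_five_choosable_general G.finite_verts G.not_hasCliqueMinorOn_five h5
  exact ⟨φ, hφL, fun u v huv ↦ hφ u (G.adj_mem u v huv) v (G.adj_mem v u (G.adj_symm u v huv)) huv⟩
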